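/- arXiv:1806.11416 — 4 statements merged into one kernel-verified Lean document; each statement's English description precedes it below -/
import Mathlib

section
/- Let R ⊆ ℝⁿ be a convex set, let g be twice continuously differentiable on an open set containing R, let ε > 0, and let f : R → ℝ be an ε-approximation of g on R. If x, y ∈ R and f is piecewise affine with s pieces along the segment [x, y], then s ≥ (‖x − y‖₂ / (4√ε)) · Ψ(g, x, y). -/
open scoped RealInnerProductSpace

noncomputable def hess {n : ℕ} (g : EuclideanSpace ℝ (Fin n) → ℝ)
    (z : EuclideanSpace ℝ (Fin n)) : Matrix (Fin n) (Fin n) ℝ :=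
  fun i j => iteratedFDeriv ℝ 2 g z ![EuclideanSpace.single i 1, EuclideanSpace.single j 1]

noncomputable def lamMax {n : ℕ} (A : Matrix (Fin n) (Fin n) ℝ) : ℝ := sSup (spectrum ℝ A)

noncomputable def lamMin {n : ℕ} (A : Matrix (Fin n) (Fin n) ℝ) : ℝ := sInf (spectrum ℝ A)

noncomputable def Psi {n : ℕ} (g : EuclideanSpace ℝ (Fin n) → ℝ)
    (x y : EuclideanSpace ℝ (Fin n)) : ℝ :=
  Real.sqrt (sInf ((fun α : ℝ =>
      max 0 (Real.sign (lamMax (hess g ((1 - α) • x + α • y)) *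
          lamMin (hess g ((1 - α) • x + α • y))) *
        min |lamMax (hess g ((1 - α) • x + α • y))|
            |lamMin (hess g ((1 - α) • x + α • y))|)) '' Set.Icc (0 : ℝ) 1))

/-- `f` is piecewise affine with `s` pieces along the segment `[x, y]`. -/
def PiecewiseAffineAlong {n : ℕ} (f : EuclideanSpace ℝ (Fin n) → ℝ)
    (x y : EuclideanSpace ℝ (Fin n)) (s : ℕ) : Prop :=
  ∃ α : ℕ → ℝ, α 0 = 0 ∧ α s = 1 ∧ (∀ j < s, α j < α (j + 1)) ∧
    ∀ j < s, ∃ p : EuclideanSpace ℝ (Fin n), ∃ q : ℝ,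
      ∀ a ∈ Set.Icc (α j) (α (j + 1)),
        f ((1 - a) • x + a • y) = ⟪p, (1 - a) • x + a • y⟫ + q

/-!
Restricted to the segment, `f` is a piecewise affine function of one real variable approximating
`h t = g ((1 - t) • x + t • y)`. An affine function within `ε` of `h` on `[a, b]` has vanishing
second difference at the endpoints and the midpoint, so that of `h` is at most `4 * ε` in absolute
value. Two applications of the mean value theorem show that it equals `h'' ξ * ((b - a) / 2) ^ 2`
for some `ξ`. The Hessian being symmetric, its extreme eigenvalues bound its quadratic form, whence
`|h'' ξ| ≥ Psi g x y ^ 2 * ‖x - y‖ ^ 2`, and each piece has length at most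
`4 * √ε / (‖x - y‖ * Psi g x y)`. The lengths of the pieces add up to `1`.
-/

open Set
open scoped Matrix Topology

section Spectrum

open scoped MatrixOrder ComplexOrder

theorem smul_star_dotProduct_self_le_of_le_spectrum {ι 𝕜 : Type*} [Fintype ι] [DecidableEq ι]
    [RCLike 𝕜] {A : Matrix ι ι 𝕜} (hA : A.IsHermitian) {c : ℝ} (hc : ∀ r ∈ spectrum ℝ A, c ≤ r)
    (v : ι → 𝕜) : c • (star v ⬝ᵥ v) ≤ star v ⬝ᵥ (A *ᵥ v) := by
  have hle : algebraMap ℝ (Matrix ι ι 𝕜) c ≤ A := (algebraMap_le_iff_le_spectrum hA).2 hc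
  have hnonneg := (Matrix.le_iff.1 hle).dotProduct_mulVec_nonneg v
  rwa [Algebra.algebraMap_eq_smul_one, Matrix.sub_mulVec, Matrix.smul_mulVec, Matrix.one_mulVec,
    dotProduct_sub, dotProduct_smul, sub_nonneg] at hnonneg

variable {n : ℕ} {A : Matrix (Fin n) (Fin n) ℝ}

theorem lamMin_neg (A : Matrix (Fin n) (Fin n) ℝ) : lamMin (-A) = -lamMax A := by
  rw [lamMin, lamMax, ← spectrum.neg_eq, Real.sInf_neg]

theorem lamMin_mul_le_dotProduct_mulVec (hA : A.IsHermitian) (v : Fin n → ℝ) :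
    lamMin A * (v ⬝ᵥ v) ≤ v ⬝ᵥ (A *ᵥ v) :=
  smul_star_dotProduct_self_le_of_le_spectrum hA
    (fun _ hr => csInf_le A.finite_real_spectrum.bddBelow hr) v

theorem dotProduct_mulVec_le_lamMax_mul (hA : A.IsHermitian) (v : Fin n → ℝ) :
    v ⬝ᵥ (A *ᵥ v) ≤ lamMax A * (v ⬝ᵥ v) := by
  simpa [lamMin_neg, Matrix.neg_mulVec] using lamMin_mul_le_dotProduct_mulVec hA.neg v

/-- The quantity whose infimum along a segment is `Psi ^ 2`: the least absolute value of an
eigenvalue when the symmetric matrix `A` is positive or negative definite, and `0` otherwise. -/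
noncomputable def definiteness (A : Matrix (Fin n) (Fin n) ℝ) : ℝ :=
  max 0 (Real.sign (lamMax A * lamMin A) * min |lamMax A| |lamMin A|)

theorem definiteness_nonneg (A : Matrix (Fin n) (Fin n) ℝ) : 0 ≤ definiteness A :=
  le_max_left _ _

theorem definiteness_le_max (A : Matrix (Fin n) (Fin n) ℝ) :
    definiteness A ≤ max 0 (max (lamMin A) (-lamMax A)) := by
  refine max_le (le_max_left _ _) ?_
  rcases lt_trichotomy (lamMax A * lamMin A) 0 with hneg | hzero | hpos
  · exact le_max_of_le_left (by rw [Real.sign_of_neg hneg]; simp)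
  · simp [hzero]
  · rw [Real.sign_of_pos hpos, one_mul]
    refine le_max_of_le_right ?_
    rcases pos_and_pos_or_neg_and_neg_of_mul_pos hpos with ⟨-, hmin⟩ | ⟨hmax, -⟩
    · exact le_max_of_le_left ((min_le_right _ _).trans_eq (abs_of_pos hmin))
    · exact le_max_of_le_right ((min_le_left _ _).trans_eq (abs_of_neg hmax))

theorem definiteness_mul_le_abs_dotProduct_mulVec (hA : A.IsHermitian) (v : Fin n → ℝ) :
    definiteness A * (v ⬝ᵥ v) ≤ |v ⬝ᵥ (A *ᵥ v)| := by
  have hv : 0 ≤ v ⬝ᵥ v := dotProduct_star_self_nonneg v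
  calc definiteness A * (v ⬝ᵥ v)
      ≤ max 0 (max (lamMin A) (-lamMax A)) * (v ⬝ᵥ v) :=
        mul_le_mul_of_nonneg_right (definiteness_le_max A) hv
    _ = max 0 (max (lamMin A * (v ⬝ᵥ v)) (-(lamMax A * (v ⬝ᵥ v)))) := by
        rw [max_mul_of_nonneg _ _ hv, max_mul_of_nonneg _ _ hv, zero_mul, neg_mul]
    _ ≤ |v ⬝ᵥ (A *ᵥ v)| :=
        max_le (abs_nonneg _) (max_le_max (lamMin_mul_le_dotProduct_mulVec hA v)
          (neg_le_neg (dotProduct_mulVec_le_lamMax_mul hA v)))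

end Spectrum

section Hessian

variable {n : ℕ} {g : EuclideanSpace ℝ (Fin n) → ℝ} {z : EuclideanSpace ℝ (Fin n)}

theorem hess_apply (g : EuclideanSpace ℝ (Fin n) → ℝ) (z : EuclideanSpace ℝ (Fin n))
    (i j : Fin n) : hess g z i j =
      fderiv ℝ (fderiv ℝ g) z (EuclideanSpace.single i 1) (EuclideanSpace.single j 1) := by
  simp [hess, iteratedFDeriv_two_apply]

theorem hess_isHermitian (hg : ∀ᶠ w in 𝓝 z, DifferentiableAt ℝ g w)
    (hg' : DifferentiableAt ℝ (fderiv ℝ g) z) : (hess g z).IsHermitian := by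
  ext i j
  rw [Matrix.conjTranspose_apply, star_trivial, hess_apply, hess_apply]
  exact second_derivative_symmetric_of_eventually (hg.mono fun _ hw => hw.hasFDerivAt)
    hg'.hasFDerivAt _ _

theorem dotProduct_hess_mulVec (g : EuclideanSpace ℝ (Fin n) → ℝ)
    (z v w : EuclideanSpace ℝ (Fin n)) :
    v.ofLp ⬝ᵥ (hess g z *ᵥ w.ofLp) = fderiv ℝ (fderiv ℝ g) z v w := by
  let b := (EuclideanSpace.basisFun (Fin n) ℝ).toBasis
  have hess_eq : hess g z = LinearMap.toMatrix₂ b b (fderiv ℝ (fderiv ℝ g) z).toLinearMap₁₂ := by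
    ext i j
    simp [b, hess_apply, LinearMap.toMatrix₂_apply]
  rw [hess_eq]
  exact (apply_eq_dotProduct_toMatrix₂_mulVec b b (fderiv ℝ (fderiv ℝ g) z).toLinearMap₁₂ v w).symm

theorem definiteness_hess_mul_norm_sq_le (hg : ∀ᶠ w in 𝓝 z, DifferentiableAt ℝ g w)
    (hg' : DifferentiableAt ℝ (fderiv ℝ g) z) (v : EuclideanSpace ℝ (Fin n)) :
    definiteness (hess g z) * ‖v‖ ^ 2 ≤ |fderiv ℝ (fderiv ℝ g) z v v| := by
  have hnorm : v.ofLp ⬝ᵥ v.ofLp = ‖v‖ ^ 2 :=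
    (EuclideanSpace.inner_eq_star_dotProduct v v).symm.trans (real_inner_self_eq_norm_sq v)
  simpa only [hnorm, dotProduct_hess_mulVec] using
    definiteness_mul_le_abs_dotProduct_mulVec (hess_isHermitian hg hg') v.ofLp

theorem Psi_nonneg (g : EuclideanSpace ℝ (Fin n) → ℝ) (x y : EuclideanSpace ℝ (Fin n)) :
    0 ≤ Psi g x y :=
  Real.sqrt_nonneg _

theorem Psi_sq_le_definiteness_hess (g : EuclideanSpace ℝ (Fin n) → ℝ)
    (x y : EuclideanSpace ℝ (Fin n)) {t : ℝ} (ht : t ∈ Icc (0 : ℝ) 1) :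
    Psi g x y ^ 2 ≤ definiteness (hess g ((1 - t) • x + t • y)) := by
  let φ : ℝ → ℝ := fun a => definiteness (hess g ((1 - a) • x + a • y))
  have hφ : ∀ r ∈ φ '' Icc 0 1, 0 ≤ r := forall_mem_image.2 fun _ _ => definiteness_nonneg _
  calc Psi g x y ^ 2 = sInf (φ '' Icc 0 1) := Real.sq_sqrt (Real.sInf_nonneg hφ)
    _ ≤ φ t := csInf_le ⟨0, hφ⟩ (mem_image_of_mem φ ht)

end Hessian

section Segment

variable {𝕜 E F : Type*} [NontriviallyNormedField 𝕜] [NormedAddCommGroup E] [NormedSpace 𝕜 E]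
  [NormedAddCommGroup F] [NormedSpace 𝕜 F] {g : E → F} {x y : E} {t : 𝕜}

theorem hasDerivAt_comp_segment (hg : DifferentiableAt 𝕜 g ((1 - t) • x + t • y)) :
    HasDerivAt (fun a : 𝕜 => g ((1 - a) • x + a • y))
      (fderiv 𝕜 g ((1 - t) • x + t • y) (y - x)) t := by
  simp only [← AffineMap.lineMap_apply_module] at hg ⊢
  exact hg.hasFDerivAt.comp_hasDerivAt t AffineMap.hasDerivAt_lineMap

theorem hasDerivAt_fderiv_comp_segment
    (hg' : DifferentiableAt 𝕜 (fderiv 𝕜 g) ((1 - t) • x + t • y)) :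
    HasDerivAt (fun a : 𝕜 => fderiv 𝕜 g ((1 - a) • x + a • y) (y - x))
      (fderiv 𝕜 (fderiv 𝕜 g) ((1 - t) • x + t • y) (y - x) (y - x)) t := by
  simpa using (hasDerivAt_comp_segment hg').clm_apply (hasDerivAt_const t (y - x))

end Segment

section RealLine

variable {h h' h'' : ℝ → ℝ}

theorem exists_second_difference_eq {c δ : ℝ} (hδ : 0 < δ)
    (hh : ∀ t ∈ Icc (c - δ) (c + δ), HasDerivAt h (h' t) t)
    (hh' : ∀ t ∈ Icc (c - δ) (c + δ), HasDerivAt h' (h'' t) t) :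
    ∃ ξ ∈ Icc (c - δ) (c + δ), h (c + δ) - 2 * h c + h (c - δ) = h'' ξ * δ ^ 2 := by
  have hstep : ∀ t ∈ Icc (c - δ) c,
      HasDerivAt (fun t => h (t + δ) - h t) (h' (t + δ) - h' t) t := fun t ht =>
    ((hh (t + δ) ⟨by linarith [ht.1], by linarith [ht.2]⟩).comp_add_const t δ).sub
      (hh t ⟨ht.1, by linarith [ht.2]⟩)
  obtain ⟨η, hη, hη_eq⟩ := exists_hasDerivAt_eq_slope _ _ (sub_lt_self c hδ)
    (HasDerivAt.continuousOn hstep) fun t ht => hstep t (Ioo_subset_Icc_self ht)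
  have hsub : Icc η (η + δ) ⊆ Icc (c - δ) (c + δ) :=
    Icc_subset_Icc hη.1.le (by linarith [hη.2])
  obtain ⟨ξ, hξ, hξ_eq⟩ := exists_hasDerivAt_eq_slope h' h'' (lt_add_of_pos_right η hδ)
    (HasDerivAt.continuousOn fun t ht => hh' t (hsub ht))
    fun t ht => hh' t (hsub (Ioo_subset_Icc_self ht))
  refine ⟨ξ, hsub (Ioo_subset_Icc_self hξ), ?_⟩
  rw [sub_sub_cancel, sub_add_cancel, eq_div_iff hδ.ne'] at hη_eq
  rw [add_sub_cancel_left, eq_div_iff hδ.ne'] at hξ_eq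
  linear_combination -hη_eq - δ * hξ_eq

theorem mul_sq_le_of_affine_approx {a b k ε p q : ℝ} (hab : a < b)
    (hh : ∀ t ∈ Icc a b, HasDerivAt h (h' t) t) (hh' : ∀ t ∈ Icc a b, HasDerivAt h' (h'' t) t)
    (hk : ∀ t ∈ Icc a b, k ≤ |h'' t|) (happrox : ∀ t ∈ Icc a b, |p * t + q - h t| ≤ ε) :
    k * (b - a) ^ 2 ≤ 16 * ε := by
  obtain ⟨c, δ, rfl, rfl⟩ : ∃ c δ, a = c - δ ∧ b = c + δ :=
    ⟨(a + b) / 2, (b - a) / 2, by ring, by ring⟩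
  have hδ : 0 < δ := by linarith
  obtain ⟨ξ, hξ, hξ_eq⟩ := exists_second_difference_eq hδ hh hh'
  have hleft := abs_le.1 (happrox (c - δ) (left_mem_Icc.2 hab.le))
  have hmid := abs_le.1 (happrox c ⟨by linarith, by linarith⟩)
  have hright := abs_le.1 (happrox (c + δ) (right_mem_Icc.2 hab.le))
  -- The second difference of `p * t + q` vanishes, so only the approximation errors survive.
  have hdiff : |h (c + δ) - 2 * h c + h (c - δ)| ≤ 4 * ε :=
    abs_le.2 ⟨by linarith, by linarith⟩
  calc k * (c + δ - (c - δ)) ^ 2 = 4 * (k * δ ^ 2) := by ring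
    _ ≤ 4 * (|h'' ξ| * δ ^ 2) := by gcongr; exact hk ξ hξ
    _ = 4 * |h (c + δ) - 2 * h c + h (c - δ)| := by rw [hξ_eq, abs_mul, abs_sq]
    _ ≤ 16 * ε := by linarith

theorem mul_sqrt_le_of_affine_approx {a b k ε p q : ℝ} (hab : a < b)
    (hh : ∀ t ∈ Icc a b, HasDerivAt h (h' t) t) (hh' : ∀ t ∈ Icc a b, HasDerivAt h' (h'' t) t)
    (hk : ∀ t ∈ Icc a b, k ≤ |h'' t|) (happrox : ∀ t ∈ Icc a b, |p * t + q - h t| ≤ ε) :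
    (b - a) * √k ≤ 4 * √ε := by
  calc (b - a) * √k = √(k * (b - a) ^ 2) := by
        rw [Real.sqrt_mul' _ (sq_nonneg _), Real.sqrt_sq (sub_pos.2 hab).le, mul_comm]
    _ ≤ √(4 ^ 2 * ε) := Real.sqrt_le_sqrt <| by
        linarith [mul_sq_le_of_affine_approx hab hh hh' hk happrox]
    _ = 4 * √ε := by rw [Real.sqrt_mul (by positivity), Real.sqrt_sq (by positivity)]

theorem Icc_succ_subset_Icc {β : Type*} [Preorder β] {α : ℕ → β} {s j : ℕ}
    (hα : ∀ j < s, α j ≤ α (j + 1)) (hj : j < s) :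
    Icc (α j) (α (j + 1)) ⊆ Icc (α 0) (α s) := by
  have hmono : MonotoneOn α (Iic s) := monotoneOn_of_le_add_one ordConnected_Iic
    fun i _ _ hi => hα i hi
  exact Icc_subset_Icc (hmono (Nat.zero_le s) hj.le (Nat.zero_le j)) (hmono hj self_mem_Iic hj)

theorem mul_sqrt_le_of_piecewise_affine_approx {f : ℝ → ℝ} {α : ℕ → ℝ} {s : ℕ} {a b k ε : ℝ}
    (h0 : α 0 = a) (hs : α s = b) (hα : ∀ j < s, α j < α (j + 1))
    (hf : ∀ j < s, ∃ p q : ℝ, ∀ t ∈ Icc (α j) (α (j + 1)), f t = p * t + q)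
    (hh : ∀ t ∈ Icc a b, HasDerivAt h (h' t) t)
    (hh' : ∀ t ∈ Icc a b, HasDerivAt h' (h'' t) t)
    (hk : ∀ t ∈ Icc a b, k ≤ |h'' t|)
    (happrox : ∀ t ∈ Icc a b, |f t - h t| ≤ ε) :
    (b - a) * √k ≤ s * (4 * √ε) := by
  subst h0 hs
  have hpiece : ∀ j ∈ Finset.range s, (α (j + 1) - α j) * √k ≤ 4 * √ε := by
    intro j hj
    have hj : j < s := Finset.mem_range.1 hj
    have hsub := Icc_succ_subset_Icc (fun i hi => (hα i hi).le) hj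
    obtain ⟨p, q, hpq⟩ := hf j hj
    exact mul_sqrt_le_of_affine_approx (hα j hj) (fun t ht => hh t (hsub ht))
      (fun t ht => hh' t (hsub ht)) (fun t ht => hk t (hsub ht))
      fun t ht => hpq t ht ▸ happrox t (hsub ht)
  calc (α s - α 0) * √k = ∑ j ∈ Finset.range s, (α (j + 1) - α j) * √k := by
        rw [← Finset.sum_mul, Finset.sum_range_sub]
    _ ≤ s * (4 * √ε) := by simpa using Finset.sum_le_sum hpiece

end RealLine

theorem PiecewiseAffineAlong.exists_affine_parametrization {n : ℕ}
    {f : EuclideanSpace ℝ (Fin n) → ℝ} {x y : EuclideanSpace ℝ (Fin n)} {s : ℕ}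
    (hs : PiecewiseAffineAlong f x y s) :
    ∃ α : ℕ → ℝ, α 0 = 0 ∧ α s = 1 ∧ (∀ j < s, α j < α (j + 1)) ∧
      ∀ j < s, ∃ p q : ℝ, ∀ t ∈ Icc (α j) (α (j + 1)), f ((1 - t) • x + t • y) = p * t + q := by
  obtain ⟨α, h0, h1, hα, hf⟩ := hs
  refine ⟨α, h0, h1, hα, fun j hj => ?_⟩
  obtain ⟨p, q, hpq⟩ := hf j hj
  refine ⟨⟪p, y⟫ - ⟪p, x⟫, ⟪p, x⟫ + q, fun t ht => ?_⟩
  rw [hpq t ht, inner_add_right, inner_smul_right, inner_smul_right]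
  ring

theorem pieces_ge_of_approx_general {n : ℕ} {U : Set (EuclideanSpace ℝ (Fin n))} (hU : IsOpen U)
    {f g : EuclideanSpace ℝ (Fin n) → ℝ} {x y : EuclideanSpace ℝ (Fin n)}
    (hxy : segment ℝ x y ⊆ U) (hg : DifferentiableOn ℝ g U)
    (hg' : DifferentiableOn ℝ (fderiv ℝ g) U) {ε : ℝ} (hε : 0 < ε)
    (hf : ∀ z ∈ segment ℝ x y, |f z - g z| ≤ ε) {s : ℕ} (hs : PiecewiseAffineAlong f x y s) :
    (s : ℝ) ≥ (‖x - y‖ / (4 * √ε)) * Psi g x y := by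
  obtain ⟨α, h0, h1, hα, hfα⟩ := hs.exists_affine_parametrization
  rw [segment_eq_image, image_subset_iff] at hxy
  rw [segment_eq_image, forall_mem_image] at hf
  have hgt : ∀ t ∈ Icc (0 : ℝ) 1, ∀ᶠ w in 𝓝 ((1 - t) • x + t • y), DifferentiableAt ℝ g w :=
    fun t ht => hg.eventually_differentiableAt (hU.mem_nhds (hxy ht))
  have hgt' : ∀ t ∈ Icc (0 : ℝ) 1, DifferentiableAt ℝ (fderiv ℝ g) ((1 - t) • x + t • y) :=
    fun t ht => hg'.differentiableAt (hU.mem_nhds (hxy ht))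
  have hcurv : ∀ t ∈ Icc (0 : ℝ) 1, (‖x - y‖ * Psi g x y) ^ 2 ≤
      |fderiv ℝ (fderiv ℝ g) ((1 - t) • x + t • y) (y - x) (y - x)| := fun t ht => by
    rw [mul_pow, mul_comm, norm_sub_rev]
    exact (mul_le_mul_of_nonneg_right (Psi_sq_le_definiteness_hess g x y ht) (sq_nonneg _)).trans
      (definiteness_hess_mul_norm_sq_le (hgt t ht) (hgt' t ht) _)
  have hpieces := mul_sqrt_le_of_piecewise_affine_approx h0 h1 hα hfα
    (fun t ht => hasDerivAt_comp_segment (hgt t ht).self_of_nhds)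
    (fun t ht => hasDerivAt_fderiv_comp_segment (hgt' t ht)) hcurv fun t ht => hf ht
  rw [sub_zero, one_mul,
    Real.sqrt_sq (mul_nonneg (norm_nonneg _) (Psi_nonneg g x y))] at hpieces
  rwa [ge_iff_le, div_mul_eq_mul_div, div_le_iff₀ (by positivity)]

/-- Proposition 2: a piecewise-affine ε-approximation of a C² function `g` on a convex set
has at least `(‖x − y‖₂ / (4√ε)) · Ψ(g, x, y)` pieces along any segment `[x, y]` in the set. -/
theorem pieces_ge_of_approx {n : ℕ} (R : Set (EuclideanSpace ℝ (Fin n))) (hR : Convex ℝ R)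
    (U : Set (EuclideanSpace ℝ (Fin n))) (hU : IsOpen U) (hRU : R ⊆ U)
    (g : EuclideanSpace ℝ (Fin n) → ℝ) (hg : ContDiffOn ℝ 2 g U)
    (ε : ℝ) (hε : 0 < ε)
    (f : EuclideanSpace ℝ (Fin n) → ℝ) (hf : ∀ z ∈ R, |f z - g z| ≤ ε)
    (x y : EuclideanSpace ℝ (Fin n)) (hx : x ∈ R) (hy : y ∈ R)
    (s : ℕ) (hs : PiecewiseAffineAlong f x y s) :
    (s : ℝ) ≥ (‖x - y‖ / (4 * Real.sqrt ε)) * Psi g x y :=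
  pieces_ge_of_approx_general hU ((hR.segment_subset hx hy).trans hRU)
    (hg.differentiableOn two_ne_zero)
    ((hg.fderiv_of_isOpen hU (m := 1) (by norm_num)).differentiableOn one_ne_zero) hε
    (fun z hz => hf z (hR.segment_subset hx hy hz)) hs
end

section
/- Let g be three times continuously differentiable on an open set containing [0,1]ⁿ with |D^J g(x)| ≤ δ for every x ∈ [0,1]ⁿ and every multi-index J with |J| = 3, let ε > 0, and let f : [0,1]ⁿ → ℝ be an ε-approximation of g on [0,1]ⁿ. Then there exist x, y ∈ [0,1]ⁿ such that whenever f is piecewise affine with s pieces along the segment [x, y], one has s ≥ sqrt( ( max_{z ∈ [0,1]ⁿ} |Δg(z)| · n⁻¹ − δ·n^{3/2} )⁺ / (16 ε) ). -/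
open scoped RealInnerProductSpace

/-- The unit cube `[0,1]ⁿ`. -/
def unitCube (n : ℕ) : Set (EuclideanSpace ℝ (Fin n)) :=
  {z | ∀ k, z k ∈ Set.Icc (0 : ℝ) 1}

/-!
On an interval of length `L` on which `|φ''| ≥ c`, an affine function within `ε` of `φ` forces
`c L² ≤ 16 ε`: its second difference vanishes, that of `φ` is `(L/2)² φ''(ξ)`, and the two differ by
at most `4 ε`. By Cauchy–Schwarz, `s` such pieces cover a unit interval only if `c ≤ 16 ε s²`.

At a point of the cube where `|Δg|` is maximal, some pure second derivative `∂ₖ²g` is at least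
`|Δg| / n` in absolute value. The segment is the full chord of the cube through this point in
direction `k`: along it, `∂ₖ²g` moves by at most `δ`, by the bound on `∂ₖ³g`.
-/

open Set Finset

section RealFunctions

variable {φ φ' φ'' : ℝ → ℝ} {a b c ε : ℝ}

theorem exists_second_difference_eq_s3 (hab : a < b)
    (hφ : ∀ t ∈ Icc a b, HasDerivAt φ (φ' t) t) (hφ' : ∀ t ∈ Icc a b, HasDerivAt φ' (φ'' t) t) :
    ∃ ξ ∈ Ioo a b, φ b - 2 * φ ((a + b) / 2) + φ a = ((b - a) / 2) ^ 2 * φ'' ξ := by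
  set r := (b - a) / 2 with hr
  have hr0 : 0 < r := by linarith
  have hdiff : ∀ t ∈ Icc a (a + r),
      HasDerivAt (fun t => φ (t + r) - φ t) (φ' (t + r) - φ' t) t := fun t ht =>
    ((hφ (t + r) ⟨by linarith [ht.1], by linarith [ht.2]⟩).comp_add_const t r).sub
      (hφ t ⟨ht.1, by linarith [ht.2]⟩)
  obtain ⟨η, hη, hslope⟩ := exists_hasDerivAt_eq_slope _ _ (by linarith : a < a + r)
    (HasDerivAt.continuousOn hdiff) fun t ht => hdiff t (Ioo_subset_Icc_self ht)
  have hsub : Icc η (η + r) ⊆ Icc a b :=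
    Icc_subset_Icc hη.1.le (by linarith [hη.2])
  obtain ⟨ξ, hξ, hslope'⟩ := exists_hasDerivAt_eq_slope φ' φ'' (by linarith : η < η + r)
    (HasDerivAt.continuousOn fun t ht => hφ' t (hsub ht))
    fun t ht => hφ' t (hsub (Ioo_subset_Icc_self ht))
  refine ⟨ξ, ⟨hη.1.trans hξ.1, by linarith [hξ.2, hη.2]⟩, ?_⟩
  have hmid : (a + b) / 2 = a + r := by linarith
  have hb : a + r + r = b := by linarith
  rw [add_sub_cancel_left, eq_div_iff hr0.ne'] at hslope hslope'
  rw [hb] at hslope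
  rw [hmid]
  linear_combination -hslope - r * hslope'

theorem mul_sq_length_le_of_affine_approx (hab : a < b)
    (hφ : ∀ t ∈ Icc a b, HasDerivAt φ (φ' t) t) (hφ' : ∀ t ∈ Icc a b, HasDerivAt φ' (φ'' t) t)
    (hc : ∀ t ∈ Icc a b, c ≤ |φ'' t|) {u v : ℝ} (hε : ∀ t ∈ Icc a b, |u * t + v - φ t| ≤ ε) :
    c * (b - a) ^ 2 ≤ 16 * ε := by
  obtain ⟨ξ, hξ, heq⟩ := exists_second_difference_eq_s3 hab hφ hφ'
  have hleft := abs_le.1 (hε a (left_mem_Icc.2 hab.le))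
  have hmid := abs_le.1 (hε ((a + b) / 2) ⟨by linarith, by linarith⟩)
  have hright := abs_le.1 (hε b (right_mem_Icc.2 hab.le))
  have hdiff : |((b - a) / 2) ^ 2 * φ'' ξ| ≤ 4 * ε := by
    rw [← heq, abs_le]
    constructor <;> linarith
  rw [abs_mul, abs_of_nonneg (sq_nonneg _)] at hdiff
  have := mul_le_mul_of_nonneg_left (hc ξ (Ioo_subset_Icc_self hξ)) (sq_nonneg ((b - a) / 2))
  linarith

end RealFunctions

theorem mul_sq_sub_le_of_forall_step {α : ℕ → ℝ} {s : ℕ} {c K : ℝ} (hc : 0 ≤ c)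
    (hstep : ∀ j < s, c * (α (j + 1) - α j) ^ 2 ≤ K) :
    c * (α s - α 0) ^ 2 ≤ K * s ^ 2 :=
  calc c * (α s - α 0) ^ 2 = c * (∑ j ∈ range s, (α (j + 1) - α j)) ^ 2 := by
        rw [sum_range_sub]
    _ ≤ c * (#(range s) * ∑ j ∈ range s, (α (j + 1) - α j) ^ 2) := by
        gcongr
        exact sq_sum_le_card_mul_sum_sq
    _ = s * ∑ j ∈ range s, c * (α (j + 1) - α j) ^ 2 := by
        rw [card_range, ← mul_sum, mul_left_comm]
    _ ≤ s * (#(range s) • K) := by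
        gcongr
        exact sum_le_card_nsmul _ _ _ fun j hj => hstep j (mem_range.1 hj)
    _ = K * s ^ 2 := by
        rw [card_range, nsmul_eq_mul]
        ring

theorem exists_norm_sum_mul_inv_card_le {ι E : Type*} [SeminormedAddCommGroup E] {t : Finset ι}
    (ht : t.Nonempty) (v : ι → E) : ∃ i ∈ t, ‖∑ j ∈ t, v j‖ * (#t : ℝ)⁻¹ ≤ ‖v i‖ := by
  obtain ⟨i, hi, hmax⟩ := t.exists_max_image (fun j => ‖v j‖) ht
  refine ⟨i, hi, (mul_inv_le_iff₀' (Nat.cast_pos.2 ht.card_pos)).2 ?_⟩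
  calc ‖∑ j ∈ t, v j‖ ≤ ∑ j ∈ t, ‖v j‖ := norm_sum_le t v
    _ ≤ #t * ‖v i‖ := by simpa only [nsmul_eq_mul] using sum_le_card_nsmul t _ _ hmax

theorem hasDerivAt_iteratedFDeriv_comp {𝕜 E F : Type*} [NontriviallyNormedField 𝕜]
    [NormedAddCommGroup E] [NormedSpace 𝕜 E] [NormedAddCommGroup F] [NormedSpace 𝕜 F]
    {g : E → F} {γ : 𝕜 → E} {t : 𝕜} {v : E} {m : ℕ} {N : WithTop ℕ∞}
    (hg : ContDiffAt 𝕜 N g (γ t)) (hm : m < N) (hγ : HasDerivAt γ v t) (w : Fin m → E) :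
    HasDerivAt (fun t => iteratedFDeriv 𝕜 m g (γ t) w)
      (iteratedFDeriv 𝕜 (m + 1) g (γ t) (Fin.cons v w)) t := by
  have hderiv : HasDerivAt (fun t => iteratedFDeriv 𝕜 m g (γ t))
      (fderiv 𝕜 (iteratedFDeriv 𝕜 m g) (γ t) v) t :=
    (hg.differentiableAt_iteratedFDeriv hm).hasFDerivAt.comp_hasDerivAt t hγ
  exact (ContinuousMultilinearMap.apply 𝕜 _ F w).hasFDerivAt.comp_hasDerivAt t hderiv

section Euclidean

variable {n : ℕ} {f g : EuclideanSpace ℝ (Fin n) → ℝ} {x y z : EuclideanSpace ℝ (Fin n)}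

theorem PiecewiseAffineAlong.le_mul_sq {s : ℕ} (hs : PiecewiseAffineAlong f x y s)
    {φ φ' φ'' : ℝ → ℝ} {c ε : ℝ}
    (hφ : ∀ t ∈ Icc (0 : ℝ) 1, HasDerivAt φ (φ' t) t)
    (hφ' : ∀ t ∈ Icc (0 : ℝ) 1, HasDerivAt φ' (φ'' t) t)
    (hc : 0 ≤ c) (hcφ : ∀ t ∈ Icc (0 : ℝ) 1, c ≤ |φ'' t|)
    (hε : ∀ t ∈ Icc (0 : ℝ) 1, |f ((1 - t) • x + t • y) - φ t| ≤ ε) :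
    c ≤ 16 * ε * s ^ 2 := by
  obtain ⟨α, hα0, hαs, hα, haff⟩ := hs
  have hmono : MonotoneOn α (Set.Iic s) := (strictMonoOn_Iic_of_lt_succ hα).monotoneOn
  have hsub : ∀ j < s, Icc (α j) (α (j + 1)) ⊆ Icc 0 1 := fun j hj =>
    Icc_subset_Icc (hα0 ▸ hmono (Nat.zero_le s) hj.le (Nat.zero_le j))
      (hαs ▸ hmono hj self_mem_Iic hj)
  have hstep : ∀ j < s, c * (α (j + 1) - α j) ^ 2 ≤ 16 * ε := by
    intro j hj
    obtain ⟨p, q, hpq⟩ := haff j hj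
    refine mul_sq_length_le_of_affine_approx (u := ⟪p, y - x⟫) (v := ⟪p, x⟫ + q) (hα j hj)
      (fun t ht => hφ t (hsub j hj ht)) (fun t ht => hφ' t (hsub j hj ht))
      (fun t ht => hcφ t (hsub j hj ht)) fun t ht => ?_
    have heval : f ((1 - t) • x + t • y) = ⟪p, y - x⟫ * t + (⟪p, x⟫ + q) := by
      rw [hpq t ht, inner_add_right, inner_smul_right, inner_smul_right, inner_sub_right]
      ring
    exact heval ▸ hε t (hsub j hj ht)
  simpa [hα0, hαs] using mul_sq_sub_le_of_forall_step hc hstep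

theorem zero_mem_unitCube : (0 : EuclideanSpace ℝ (Fin n)) ∈ unitCube n := fun _ => by simp

theorem isCompact_unitCube (n : ℕ) : IsCompact (unitCube n) := by
  have hpre : unitCube n = PiLp.homeomorph 2 (fun _ : Fin n => ℝ) ⁻¹' univ.pi fun _ => Icc 0 1 := by
    ext z
    exact (mem_univ_pi (t := fun _ => Icc (0 : ℝ) 1)).symm
  rw [hpre, Homeomorph.isCompact_preimage]
  exact isCompact_univ_pi fun _ => isCompact_Icc

theorem continuousAt_hess_apply (hg : ContDiffAt ℝ 2 g z) (i j : Fin n) :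
    ContinuousAt (fun z => hess g z i j) z :=
  (ContinuousMultilinearMap.apply ℝ (fun _ : Fin 2 => EuclideanSpace ℝ (Fin n)) ℝ
    ![EuclideanSpace.single i 1, EuclideanSpace.single j 1]).continuous.continuousAt.comp
    (hg.continuousAt_iteratedFDeriv le_rfl)

/-- The point of the line through `z` in the `k`-th coordinate direction whose `k`-th coordinate is
`t`. Over `t ∈ [0, 1]`, this parametrizes the chord of the unit cube through `z` in direction
`k`. -/
noncomputable def coordLine (z : EuclideanSpace ℝ (Fin n)) (k : Fin n) (t : ℝ) :
    EuclideanSpace ℝ (Fin n) :=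
  z + (t - z k) • EuclideanSpace.single k 1

theorem coordLine_self (z : EuclideanSpace ℝ (Fin n)) (k : Fin n) :
    coordLine z k (z k) = z := by
  simp [coordLine]

theorem coordLine_mem_unitCube (hz : z ∈ unitCube n) (k : Fin n) {t : ℝ} (ht : t ∈ Icc (0 : ℝ) 1) :
    coordLine z k t ∈ unitCube n := by
  intro i
  obtain rfl | hik := eq_or_ne i k
  · simpa [coordLine] using ht
  · simpa [coordLine, hik] using hz i

theorem coordLine_convex_combination (z : EuclideanSpace ℝ (Fin n)) (k : Fin n) (t : ℝ) :
    (1 - t) • coordLine z k 0 + t • coordLine z k 1 = coordLine z k t := by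
  unfold coordLine
  module

theorem hasDerivAt_coordLine (z : EuclideanSpace ℝ (Fin n)) (k : Fin n) (t : ℝ) :
    HasDerivAt (coordLine z k) (EuclideanSpace.single k 1) t := by
  have hderiv := (((hasDerivAt_id t).sub_const (z k)).smul_const
    (EuclideanSpace.single k (1 : ℝ))).const_add z
  rwa [one_smul] at hderiv

variable {δ ε : ℝ} {k : Fin n}

theorem abs_hess_sub_hess_coordLine_le (hg : ∀ x ∈ unitCube n, ContDiffAt ℝ 3 g x)
    (hD3 : ∀ x ∈ unitCube n, |iteratedFDeriv ℝ 3 g x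
      ![EuclideanSpace.single k 1, EuclideanSpace.single k 1, EuclideanSpace.single k 1]| ≤ δ)
    (hz : z ∈ unitCube n) {t : ℝ} (ht : t ∈ Icc (0 : ℝ) 1) :
    |hess g z k k - hess g (coordLine z k t) k k| ≤ δ := by
  have hderiv : ∀ u ∈ Icc (0 : ℝ) 1, HasDerivAt (fun u => hess g (coordLine z k u) k k)
      (iteratedFDeriv ℝ 3 g (coordLine z k u)
        ![EuclideanSpace.single k 1, EuclideanSpace.single k 1, EuclideanSpace.single k 1]) u :=
    fun u hu => hasDerivAt_iteratedFDeriv_comp (hg _ (coordLine_mem_unitCube hz k hu))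
      (by norm_num) (hasDerivAt_coordLine z k u) _
  have hmv := (convex_Icc (0 : ℝ) 1).norm_image_sub_le_of_norm_hasDerivWithin_le
    (fun u hu => (hderiv u hu).hasDerivWithinAt)
    (fun u hu => hD3 _ (coordLine_mem_unitCube hz k hu)) ht (hz k)
  rw [coordLine_self, Real.norm_eq_abs, Real.norm_eq_abs] at hmv
  have hδ : 0 ≤ δ := (abs_nonneg _).trans (hD3 z hz)
  have hdist : |z k - t| ≤ 1 := by
    simpa using abs_sub_le_of_le_of_le (hz k).1 (hz k).2 ht.1 ht.2
  exact hmv.trans (mul_le_of_le_one_right hδ hdist)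

theorem max_abs_hess_sub_le_mul_sq (hg : ∀ x ∈ unitCube n, ContDiffAt ℝ 3 g x)
    (hD3 : ∀ x ∈ unitCube n, |iteratedFDeriv ℝ 3 g x
      ![EuclideanSpace.single k 1, EuclideanSpace.single k 1, EuclideanSpace.single k 1]| ≤ δ)
    (hf : ∀ x ∈ unitCube n, |f x - g x| ≤ ε) (hz : z ∈ unitCube n) {s : ℕ}
    (hs : PiecewiseAffineAlong f (coordLine z k 0) (coordLine z k 1) s) :
    max (|hess g z k k| - δ) 0 ≤ 16 * ε * s ^ 2 := by
  have hmem : ∀ t ∈ Icc (0 : ℝ) 1, coordLine z k t ∈ unitCube n := fun t ht =>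
    coordLine_mem_unitCube hz k ht
  refine hs.le_mul_sq (φ := fun t => iteratedFDeriv ℝ 0 g (coordLine z k t) ![])
    (φ'' := fun t => hess g (coordLine z k t) k k)
    (fun t ht => hasDerivAt_iteratedFDeriv_comp (hg _ (hmem t ht)) (by norm_num)
      (hasDerivAt_coordLine z k t) _)
    (fun t ht => hasDerivAt_iteratedFDeriv_comp (hg _ (hmem t ht)) (by norm_num)
      (hasDerivAt_coordLine z k t) _)
    (le_max_right _ _) (fun t ht => max_le ?_ (abs_nonneg _)) fun t ht => ?_
  · linarith [abs_hess_sub_hess_coordLine_le hg hD3 hz ht,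
      abs_sub_abs_le_abs_sub (hess g z k k) (hess g (coordLine z k t) k k)]
  · simpa [coordLine_convex_combination] using hf _ (hmem t ht)

theorem exists_sSup_abs_sum_hess_eq (hg : ∀ x ∈ unitCube n, ContDiffAt ℝ 2 g x) :
    ∃ z ∈ unitCube n,
      sSup ((fun z => |∑ k, hess g z k k|) '' unitCube n) = |∑ k, hess g z k k| :=
  (isCompact_unitCube n).exists_sSup_image_eq ⟨0, zero_mem_unitCube⟩ fun x hx =>
    (ContinuousAt.abs (tendsto_finsetSum _ fun k _ =>
      continuousAt_hess_apply (hg x hx) k k)).continuousWithinAt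

end Euclidean

theorem pieces_ge_of_laplacian_general {n : ℕ} [NeZero n]
    (U : Set (EuclideanSpace ℝ (Fin n))) (hU : IsOpen U) (hRU : unitCube n ⊆ U)
    (g : EuclideanSpace ℝ (Fin n) → ℝ) (hg : ContDiffOn ℝ 3 g U) (δ : ℝ)
    (hD3 : ∀ x ∈ unitCube n, ∀ k : Fin n,
      |iteratedFDeriv ℝ 3 g x
        ![EuclideanSpace.single k 1, EuclideanSpace.single k 1, EuclideanSpace.single k 1]| ≤ δ)
    (ε : ℝ) (hε : 0 < ε)
    (f : EuclideanSpace ℝ (Fin n) → ℝ) (hf : ∀ z ∈ unitCube n, |f z - g z| ≤ ε) :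
    ∃ x ∈ unitCube n, ∃ y ∈ unitCube n, ∀ s : ℕ, PiecewiseAffineAlong f x y s →
      (s : ℝ) ≥ Real.sqrt
        (max ((sSup ((fun z => |∑ k, hess g z k k|) '' unitCube n)) * (n : ℝ)⁻¹ - δ) 0
          / (16 * ε)) := by
  have hg3 : ∀ z ∈ unitCube n, ContDiffAt ℝ 3 g z := fun z hz =>
    hg.contDiffAt (hU.mem_nhds (hRU hz))
  obtain ⟨z, hz, hsup⟩ := exists_sSup_abs_sum_hess_eq fun z hz => (hg3 z hz).of_le (by norm_num)
  obtain ⟨k, -, hk⟩ := exists_norm_sum_mul_inv_card_le univ_nonempty fun k => hess g z k k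
  rw [card_fin, Real.norm_eq_abs, Real.norm_eq_abs] at hk
  refine ⟨coordLine z k 0, coordLine_mem_unitCube hz k (by simp),
    coordLine z k 1, coordLine_mem_unitCube hz k (by simp), fun s hs => ?_⟩
  rw [hsup, ge_iff_le, Real.sqrt_le_left s.cast_nonneg, div_le_iff₀' (by positivity)]
  calc max (|∑ i, hess g z i i| * (n : ℝ)⁻¹ - δ) 0 ≤ max (|hess g z k k| - δ) 0 := by gcongr
    _ ≤ 16 * ε * s ^ 2 := max_abs_hess_sub_le_mul_sq hg3 (fun x hx => hD3 x hx k) hf hz hs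

/-- Proposition 3: lower bound on the number of affine pieces needed to ε-approximate a
C³ function on `[0,1]ⁿ` with third partial derivatives bounded by `δ`, in terms of the
maximum of the absolute value of its Laplacian. -/
theorem pieces_ge_of_laplacian {n : ℕ}
    (U : Set (EuclideanSpace ℝ (Fin n))) (hU : IsOpen U) (hRU : unitCube n ⊆ U)
    (g : EuclideanSpace ℝ (Fin n) → ℝ) (hg : ContDiffOn ℝ 3 g U) (δ : ℝ)
    (hD3 : ∀ x ∈ unitCube n, ∀ i j k : Fin n,
      |iteratedFDeriv ℝ 3 g x
        ![EuclideanSpace.single i 1, EuclideanSpace.single j 1, EuclideanSpace.single k 1]| ≤ δ)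
    (ε : ℝ) (hε : 0 < ε)
    (f : EuclideanSpace ℝ (Fin n) → ℝ) (hf : ∀ z ∈ unitCube n, |f z - g z| ≤ ε) :
    ∃ x ∈ unitCube n, ∃ y ∈ unitCube n, ∀ s : ℕ, PiecewiseAffineAlong f x y s →
      (s : ℝ) ≥ Real.sqrt
        (max ((sSup ((fun z => |∑ k, hess g z k k|) '' unitCube n)) * (n : ℝ)⁻¹
            - δ * (n : ℝ) ^ ((3 : ℝ) / 2)) 0 / (16 * ε)) := by
  obtain rfl | hn := eq_or_ne n 0
  · exact ⟨0, zero_mem_unitCube, 0, zero_mem_unitCube, fun s _ => by simp⟩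
  have : NeZero n := ⟨hn⟩
  have hδ : δ ≤ δ * (n : ℝ) ^ ((3 : ℝ) / 2) :=
    le_mul_of_one_le_right ((abs_nonneg _).trans (hD3 0 zero_mem_unitCube 0 0 0))
      (Real.one_le_rpow (Nat.one_le_cast.2 NeZero.one_le) (by norm_num))
  obtain ⟨x, hx, y, hy, h⟩ := pieces_ge_of_laplacian_general U hU hRU g hg δ
    (fun x hx k => hD3 x hx k k k) ε hε f hf
  exact ⟨x, hx, y, hy, fun s hs => (Real.sqrt_le_sqrt (by gcongr)).trans (h s hs)⟩
end

section
/- Let f₁ and f₂ be layered feedforward networks on ℝⁿ of depth d with widths ω₁, …, ω_d that have identical architecture and identical weights (the same matrices Wᵢ, vectors bᵢ, output vector c and scalar c₀, all of whose entries lie in [−A, A] for some A > 0) but activations σ₁ and σ₂ respectively. If σ₁ is Lipschitz with constant δ > 0 and sup_{z ∈ ℝ} |σ₁(z) − σ₂(z)| ≤ η, then for every x ∈ ℝⁿ, |f₁(x) − f₂(x)| ≤ (η/δ) · ( (δ·A·ω + 1)^d − 1 ), where ω = (ω₁ + … + ω_d)/d. -/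
/-- A layered feedforward network on `ℝⁿ`, allowing connections from all earlier layers
and from the input.  Layers are indexed by `0, …, depth - 1`. -/
structure LayeredNet (n : ℕ) where
  depth : ℕ
  width : ℕ → ℕ
  Win : (i : ℕ) → Fin (width i) → Fin n → ℝ
  W : (i j : ℕ) → Fin (width i) → Fin (width j) → ℝ
  b : (i : ℕ) → Fin (width i) → ℝ
  cin : Fin n → ℝ
  c : (i : ℕ) → Fin (width i) → ℝ
  c0 : ℝ

/-- The output of the hidden units in layer `i`. -/
noncomputable def LayeredNet.layer {n : ℕ} (N : LayeredNet n) (σ : ℝ → ℝ)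
    (x : EuclideanSpace ℝ (Fin n)) : (i : ℕ) → Fin (N.width i) → ℝ
  | i => fun k => σ ((∑ m, N.Win i k m * x m) +
      (∑ j : Fin i, ∑ m, N.W i j k m * N.layer σ x j m) + N.b i k)
  termination_by i => i
  decreasing_by exact j.isLt

/-- The (real-valued) output of the network with activation `σ`. -/
noncomputable def LayeredNet.eval {n : ℕ} (N : LayeredNet n) (σ : ℝ → ℝ)
    (x : EuclideanSpace ℝ (Fin n)) : ℝ :=
  (∑ m, N.cin m * x m) + (∑ i ∈ Finset.range N.depth, ∑ m, N.c i m * N.layer σ x i m) + N.c0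

/-- The number of hidden units `|H| = ω₁ + ⋯ + ω_d`. -/
def LayeredNet.numHidden {n : ℕ} (N : LayeredNet n) : ℕ :=
  ∑ i ∈ Finset.range N.depth, N.width i

/-!
Let `eᵢ` be the sup-norm distance between the outputs of layer `i` under the two activations,
and let `aᵢ = δ A ωᵢ`. Replacing `σ₁` by `σ₂` costs `η` at each unit, on top of `δ` times the
change of its input, so `eᵢ ≤ η + ∑_{j < i} aⱼ eⱼ`. A discrete Grönwall argument then gives
`η + ∑_{i < d} aᵢ eᵢ ≤ η ∏_{i < d} (1 + aᵢ)`. As the output layer is affine, `δ |f₁ - f₂|` is at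
most `∑_{i < d} aᵢ eᵢ`, and by AM-GM replacing all widths by their mean only increases the
product.
-/

open Finset

section Inequalities

theorem add_sum_mul_le_mul_prod_one_add {R : Type*} [CommSemiring R] [PartialOrder R]
    [IsOrderedRing R] {a e : ℕ → R} {η : R} {n : ℕ} (ha : ∀ i < n, 0 ≤ a i)
    (he : ∀ i < n, e i ≤ η + ∑ j ∈ range i, a j * e j) :
    η + ∑ i ∈ range n, a i * e i ≤ η * ∏ i ∈ range n, (1 + a i) := by
  induction n with
  | zero => simp
  | succ n ih =>
    have han : 0 ≤ a n := ha n n.lt_succ_self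
    calc η + ∑ i ∈ range (n + 1), a i * e i
        = (η + ∑ i ∈ range n, a i * e i) + a n * e n := by rw [sum_range_succ, add_assoc]
      _ ≤ (η + ∑ i ∈ range n, a i * e i) + a n * (η + ∑ i ∈ range n, a i * e i) := by
          gcongr
          exact he n n.lt_succ_self
      _ = (η + ∑ i ∈ range n, a i * e i) * (1 + a n) := by ring
      _ ≤ (η * ∏ i ∈ range n, (1 + a i)) * (1 + a n) := by
          gcongr
          · exact add_nonneg zero_le_one han
          · exact ih (fun i hi => ha i (hi.trans n.lt_succ_self))
              fun i hi => he i (hi.trans n.lt_succ_self)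
      _ = η * ∏ i ∈ range (n + 1), (1 + a i) := by rw [prod_range_succ, mul_assoc]

theorem prod_le_sum_div_card_pow_card {ι : Type*} (s : Finset ι) {f : ι → ℝ}
    (hf : ∀ i ∈ s, 0 ≤ f i) : ∏ i ∈ s, f i ≤ ((∑ i ∈ s, f i) / #s) ^ #s := by
  rcases s.eq_empty_or_nonempty with rfl | hs
  · simp
  have hcard : (0 : ℝ) < #s := by exact_mod_cast hs.card_pos
  have hmean : (∏ i ∈ s, f i) ^ (#s : ℝ)⁻¹ ≤ (∑ i ∈ s, f i) / #s := by
    simpa using Real.geom_mean_le_arith_mean s 1 f (by simp) (by simpa using hs) hf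
  rwa [Real.rpow_inv_le_iff_of_pos (prod_nonneg hf) (div_nonneg (sum_nonneg hf) hcard.le) hcard,
    Real.rpow_natCast] at hmean

theorem prod_one_add_le_one_add_sum_div_card_pow_card {ι : Type*} (s : Finset ι) {a : ι → ℝ}
    (ha : ∀ i ∈ s, -1 ≤ a i) : ∏ i ∈ s, (1 + a i) ≤ (1 + (∑ i ∈ s, a i) / #s) ^ #s := by
  rcases s.eq_empty_or_nonempty with rfl | hs
  · simp
  have hcard : (#s : ℝ) ≠ 0 := by exact_mod_cast hs.card_ne_zero
  calc ∏ i ∈ s, (1 + a i)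
      ≤ ((∑ i ∈ s, (1 + a i)) / #s) ^ #s :=
        prod_le_sum_div_card_pow_card s fun i hi => by linarith [ha i hi]
    _ = (1 + (∑ i ∈ s, a i) / #s) ^ #s := by
        rw [sum_add_distrib, sum_const, nsmul_one, add_div, div_self hcard]

theorem norm_sum_mul_le_mul_card_mul_norm {ι R : Type*} [Fintype ι] [NonUnitalSeminormedRing R]
    {w : ι → R} {A : ℝ} (hw : ∀ m, ‖w m‖ ≤ A) (u : ι → R) :
    ‖∑ m, w m * u m‖ ≤ A * Fintype.card ι * ‖u‖ :=
  calc ‖∑ m, w m * u m‖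
      ≤ ∑ _m : ι, A * ‖u‖ := norm_sum_le_of_le _ fun m _ =>
        norm_mul_le_of_le (hw m) (norm_le_pi_norm u m)
    _ = A * Fintype.card ι * ‖u‖ := by
        rw [sum_const, card_univ, nsmul_eq_mul, mul_left_comm, mul_assoc]

theorem norm_sum_sum_mul_sub_sum_sum_mul_le {κ R : Type*} {ι : κ → Type*} [∀ j, Fintype (ι j)]
    [NonUnitalSeminormedRing R] (s : Finset κ) {w : ∀ j, ι j → R} {A : ℝ}
    (hw : ∀ j ∈ s, ∀ m, ‖w j m‖ ≤ A) (u v : ∀ j, ι j → R) :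
    ‖∑ j ∈ s, ∑ m, w j m * u j m - ∑ j ∈ s, ∑ m, w j m * v j m‖ ≤
      ∑ j ∈ s, A * Fintype.card (ι j) * ‖u j - v j‖ := by
  simp only [← sum_sub_distrib, ← mul_sub]
  exact norm_sum_le_of_le s fun j hj => norm_sum_mul_le_mul_card_mul_norm (hw j hj) (u j - v j)

end Inequalities

namespace LayeredNet

variable {n : ℕ} (N : LayeredNet n) {A δ η : ℝ} {σ₁ σ₂ : ℝ → ℝ}

theorem norm_layer_sub_layer_le {i : ℕ} (hA : 0 ≤ A) (hW : ∀ j < i, ∀ k m, |N.W i j k m| ≤ A)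
    (hδ : 0 ≤ δ) (hlip : ∀ a b, |σ₁ a - σ₁ b| ≤ δ * |a - b|) (hη : ∀ z, |σ₁ z - σ₂ z| ≤ η)
    (x : EuclideanSpace ℝ (Fin n)) :
    ‖N.layer σ₁ x i - N.layer σ₂ x i‖ ≤
      η + ∑ j ∈ range i, δ * A * N.width j * ‖N.layer σ₁ x j - N.layer σ₂ x j‖ := by
  have hη₀ : 0 ≤ η := (abs_nonneg _).trans (hη 0)
  refine (pi_norm_le_iff_of_nonneg (by positivity)).mpr fun k => ?_
  let input (σ : ℝ → ℝ) : ℝ := (∑ m, N.Win i k m * x m) +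
    (∑ j : Fin i, ∑ m, N.W i j k m * N.layer σ x j m) + N.b i k
  have hlayer (σ : ℝ → ℝ) : N.layer σ x i k = σ (input σ) := by rw [layer]
  have hinput : |input σ₁ - input σ₂| ≤
      ∑ j ∈ range i, A * N.width j * ‖N.layer σ₁ x j - N.layer σ₂ x j‖ := by
    simp only [input, add_sub_add_right_eq_sub, add_sub_add_left_eq_sub]
    simpa only [Fintype.card_fin, Real.norm_eq_abs, ← Fin.sum_univ_eq_sum_range] using
      norm_sum_sum_mul_sub_sum_sum_mul_le (univ : Finset (Fin i))
        (fun j _ => hW j j.isLt k) (fun j => N.layer σ₁ x j) (fun j => N.layer σ₂ x j)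
  calc ‖N.layer σ₁ x i k - N.layer σ₂ x i k‖
      = |σ₁ (input σ₁) - σ₂ (input σ₂)| := by rw [hlayer, hlayer, Real.norm_eq_abs]
    _ ≤ |σ₁ (input σ₁) - σ₁ (input σ₂)| + |σ₁ (input σ₂) - σ₂ (input σ₂)| := abs_sub_le _ _ _
    _ ≤ δ * |input σ₁ - input σ₂| + η := add_le_add (hlip _ _) (hη _)
    _ ≤ δ * ∑ j ∈ range i, A * N.width j * ‖N.layer σ₁ x j - N.layer σ₂ x j‖ + η := by gcongr
    _ = η + ∑ j ∈ range i, δ * A * N.width j * ‖N.layer σ₁ x j - N.layer σ₂ x j‖ := by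
        rw [add_comm, mul_sum]
        simp only [mul_assoc]

theorem abs_eval_sub_eval_le (hc : ∀ i < N.depth, ∀ k, |N.c i k| ≤ A) (σ₁ σ₂ : ℝ → ℝ)
    (x : EuclideanSpace ℝ (Fin n)) :
    |N.eval σ₁ x - N.eval σ₂ x| ≤
      ∑ i ∈ range N.depth, A * N.width i * ‖N.layer σ₁ x i - N.layer σ₂ x i‖ := by
  rw [eval, eval, add_sub_add_right_eq_sub, add_sub_add_left_eq_sub]
  simpa only [Fintype.card_fin, Real.norm_eq_abs] using
    norm_sum_sum_mul_sub_sum_sum_mul_le (range N.depth) (fun i hi => hc i (mem_range.mp hi))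
      (N.layer σ₁ x) (N.layer σ₂ x)

theorem abs_eval_sub_eval_le_prod (hA : 0 ≤ A)
    (hW : ∀ i < N.depth, ∀ j < i, ∀ k m, |N.W i j k m| ≤ A)
    (hc : ∀ i < N.depth, ∀ k, |N.c i k| ≤ A) (hδ : 0 < δ)
    (hlip : ∀ a b, |σ₁ a - σ₁ b| ≤ δ * |a - b|) (hη : ∀ z, |σ₁ z - σ₂ z| ≤ η)
    (x : EuclideanSpace ℝ (Fin n)) :
    |N.eval σ₁ x - N.eval σ₂ x| ≤
      η / δ * (∏ i ∈ range N.depth, (1 + δ * A * N.width i) - 1) := by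
  set e : ℕ → ℝ := fun i => ‖N.layer σ₁ x i - N.layer σ₂ x i‖
  have hgronwall : η + ∑ i ∈ range N.depth, δ * A * N.width i * e i ≤
      η * ∏ i ∈ range N.depth, (1 + δ * A * N.width i) :=
    add_sum_mul_le_mul_prod_one_add (fun i _ => by positivity)
      fun i hi => N.norm_layer_sub_layer_le hA (hW i hi) hδ.le hlip hη x
  calc |N.eval σ₁ x - N.eval σ₂ x|
      ≤ ∑ i ∈ range N.depth, A * N.width i * e i := N.abs_eval_sub_eval_le hc σ₁ σ₂ x
    _ = (∑ i ∈ range N.depth, δ * A * N.width i * e i) / δ := by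
        rw [eq_div_iff hδ.ne', sum_mul]
        exact sum_congr rfl fun i _ => by ring
    _ ≤ (η * ∏ i ∈ range N.depth, (1 + δ * A * N.width i) - η) / δ := by
        gcongr
        linarith
    _ = η / δ * (∏ i ∈ range N.depth, (1 + δ * A * N.width i) - 1) := by ring

theorem prod_one_add_mul_width_le {a : ℝ} (ha : 0 ≤ a) :
    ∏ i ∈ range N.depth, (1 + a * N.width i) ≤
      (a * ((N.numHidden : ℝ) / (N.depth : ℝ)) + 1) ^ N.depth := by
  have hamgm := prod_one_add_le_one_add_sum_div_card_pow_card (range N.depth)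
    (a := fun i => a * N.width i) fun i _ => neg_one_lt_zero.le.trans (by positivity)
  rwa [card_range, ← mul_sum, ← Nat.cast_sum, mul_div_assoc, add_comm 1] at hamgm

end LayeredNet

theorem activation_change_bound_general {n : ℕ} (N : LayeredNet n) {A : ℝ} (hA : 0 ≤ A)
    (hW : ∀ i < N.depth, ∀ j < i, ∀ k m, |N.W i j k m| ≤ A)
    (hc : ∀ i < N.depth, ∀ k, |N.c i k| ≤ A)
    {σ₁ σ₂ : ℝ → ℝ} {δ : ℝ} (hδ : 0 < δ)
    (hlip : ∀ a b, |σ₁ a - σ₁ b| ≤ δ * |a - b|)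
    {η : ℝ} (hη : ∀ z, |σ₁ z - σ₂ z| ≤ η)
    (x : EuclideanSpace ℝ (Fin n)) :
    |N.eval σ₁ x - N.eval σ₂ x| ≤
      (η / δ) * ((δ * A * ((N.numHidden : ℝ) / (N.depth : ℝ)) + 1) ^ N.depth - 1) := by
  have hη₀ : 0 ≤ η := (abs_nonneg _).trans (hη 0)
  calc |N.eval σ₁ x - N.eval σ₂ x|
      ≤ η / δ * (∏ i ∈ range N.depth, (1 + δ * A * N.width i) - 1) :=
        N.abs_eval_sub_eval_le_prod hA hW hc hδ hlip hη x
    _ ≤ η / δ * ((δ * A * ((N.numHidden : ℝ) / (N.depth : ℝ)) + 1) ^ N.depth - 1) := by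
        gcongr
        exact N.prod_one_add_mul_width_le (by positivity)

/-- Theorem 3: two networks with identical architecture and weights (all in `[−A, A]`) but
different activations `σ₁` (δ-Lipschitz) and `σ₂` with `sup |σ₁ − σ₂| ≤ η` have outputs
within `(η/δ)·((δ·A·ω + 1)^d − 1)` of each other. -/
theorem activation_change_bound {n : ℕ} (N : LayeredNet n)
    (hd : 1 ≤ N.depth) (hw : ∀ i < N.depth, 1 ≤ N.width i)
    (A : ℝ) (hA : 0 < A)
    (hWin : ∀ i < N.depth, ∀ (k) (m), |N.Win i k m| ≤ A)
    (hW : ∀ i < N.depth, ∀ j < i, ∀ (k) (m), |N.W i j k m| ≤ A)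
    (hb : ∀ i < N.depth, ∀ k, |N.b i k| ≤ A)
    (hcin : ∀ m, |N.cin m| ≤ A)
    (hc : ∀ i < N.depth, ∀ k, |N.c i k| ≤ A)
    (hc0 : |N.c0| ≤ A)
    (σ₁ σ₂ : ℝ → ℝ) (δ : ℝ) (hδ : 0 < δ)
    (hlip : ∀ a b : ℝ, |σ₁ a - σ₁ b| ≤ δ * |a - b|)
    (η : ℝ) (hη : ∀ z : ℝ, |σ₁ z - σ₂ z| ≤ η)
    (x : EuclideanSpace ℝ (Fin n)) :
    |N.eval σ₁ x - N.eval σ₂ x| ≤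
      (η / δ) * ((δ * A * ((N.numHidden : ℝ) / (N.depth : ℝ)) + 1) ^ N.depth - 1) :=
  activation_change_bound_general N hA.le hW hc hδ hlip hη x
end

section
/- Let R ⊆ ℝⁿ be a compact convex set, let g be twice continuously differentiable on an open set containing R, let ε > 0, and let f be a layered feedforward network on ℝⁿ of depth d with widths ω₁, …, ω_d whose activation σ is piecewise linear with t pieces, such that f is an ε-approximation of g on R. Then for all x, y ∈ R, ((t − 1)·ω + 1)^d ≥ (‖x − y‖₂ / (4√ε)) · Ψ(g, x, y), where ω = (ω₁ + … + ω_d)/d. -/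
/-- `σ : ℝ → ℝ` is piecewise linear with `t` pieces: `ℝ` is the union of `t` pairwise
disjoint nonempty intervals on each of which `σ` coincides with an affine function. -/
def PiecewiseLinear (σ : ℝ → ℝ) (t : ℕ) : Prop :=
  ∃ I : Fin t → Set ℝ,
    (∀ i, (I i).Nonempty) ∧ (∀ i, Convex ℝ (I i)) ∧
    (Pairwise fun i j => Disjoint (I i) (I j)) ∧
    (⋃ i, I i) = Set.univ ∧
    ∀ i, ∃ a b : ℝ, ∀ z ∈ I i, σ z = a * z + b

/-!
Along the segment from `x` to `y`, parametrized by `[0, 1]`, the network is piecewise affine. A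
layer of width `w` cuts each piece into at most `w (t - 1) + 1` pieces, because a common refinement
of `w` partitions of a line into `t` intervals has at most that many intervals. By AM-GM the number
of pieces is thus at most `p = ((t - 1) ω + 1) ^ d`, and by pigeonhole some piece contains two
points of `[0, 1]` at distance at least `1 / p`.

If `Ψ = Psi g x y` is positive, the Hessian of `g` is definite all along the segment, so the second
derivative of `g` there keeps its sign and has absolute value at least `(‖x - y‖ Ψ) ^ 2`. Hence `g`
or `-g` is strongly convex along the segment; comparing its midpoint gap on that piece with that of
the network, which vanishes, gives `(‖x - y‖ Ψ) ^ 2 ≤ 16 ε p ^ 2`.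
-/

open Set
open scoped Function

section MonotoneLabels

theorem exists_monotone_label_of_partition {α ι : Type*} [LinearOrder α] [Fintype ι]
    {I : ι → Set α} (hconn : ∀ i, (I i).OrdConnected) (hdisj : Pairwise (Disjoint on I))
    (hcover : ⋃ i, I i = univ) :
    ∃ L : α →o Fin (Fintype.card ι), ∀ ⦃z w i⦄, L z = L w → z ∈ I i → w ∈ I i := by
  classical
  -- Each point is labelled by the number of pieces lying entirely to its left.
  let below (z : α) : Finset ι := {j | ∀ w ∈ I j, w < z}
  have mem_below {z j} : j ∈ below z ↔ ∀ w ∈ I j, w < z := by simp [below]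
  have not_mem_below {z j} (hz : z ∈ I j) : j ∉ below z := fun h ↦
    (mem_below.1 h z hz).false
  have exists_mem (z) : ∃ j, z ∈ I j := mem_iUnion.1 (hcover ▸ mem_univ z)
  have below_mono : Monotone below := fun z w hzw j hj ↦
    mem_below.2 fun u hu ↦ (mem_below.1 hj u hu).trans_le hzw
  have card_lt (z) : (below z).card < Fintype.card ι :=
    let ⟨_, hj⟩ := exists_mem z
    Finset.card_lt_univ_of_notMem (not_mem_below hj)
  have same_piece {z w i} (hzw : z ≤ w) (h : below z = below w) (hz : z ∈ I i) : w ∈ I i := by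
    have : i ∉ below w := h ▸ not_mem_below hz
    obtain ⟨u, hu, hwu⟩ : ∃ u ∈ I i, w ≤ u := by simpa [mem_below] using this
    exact (hconn i).out hz hu ⟨hzw, hwu⟩
  refine ⟨⟨fun z ↦ ⟨(below z).card, card_lt z⟩, fun z w h ↦ Finset.card_le_card (below_mono h)⟩,
    fun z w i h hz ↦ ?_⟩
  have hcard : (below z).card = (below w).card := congrArg Fin.val h
  rcases le_total z w with hzw | hwz
  · exact same_piece hzw (Finset.eq_of_subset_of_card_le (below_mono hzw) hcard.ge) hz
  · obtain ⟨j, hj⟩ := exists_mem w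
    have hzj := same_piece hwz (Finset.eq_of_subset_of_card_le (below_mono hwz) hcard.le) hj
    obtain rfl : i = j := hdisj.eq (not_disjoint_iff.2 ⟨z, hz, hzj⟩)
    exact hj

theorem exists_monotone_common_refinement {α ι : Type*} [LinearOrder α] [Fintype ι] {T : ι → ℕ}
    (l : ∀ i, α → Fin (T i + 1)) (hl : ∀ i, Monotone (l i) ∨ Antitone (l i)) :
    ∃ M : α →o Fin (∑ i, T i + 1), ∀ ⦃z w⦄, M z = M w → ∀ i, l i z = l i w := by
  have exists_monotone (i) : ∃ m : α →o Fin (T i + 1), ∀ z w, m z = m w → l i z = l i w :=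
    (hl i).elim (fun h ↦ ⟨⟨l i, h⟩, fun _ _ ↦ id⟩) fun h ↦
      ⟨⟨Fin.rev ∘ l i, Fin.rev_anti.comp h⟩, fun _ _ ↦ (Fin.rev_injective ·)⟩
  choose m hm using exists_monotone
  -- A sum of monotone functions takes the same value twice only if every summand does.
  have sum_lt (z) : ∑ i, (m i z : ℕ) < ∑ i, T i + 1 :=
    Nat.lt_succ_of_le (Finset.sum_le_sum fun i _ ↦ (m i z).is_le)
  have val_mono {z w} (h : z ≤ w) (i) : (m i z : ℕ) ≤ m i w := (m i).monotone h
  refine ⟨⟨fun z ↦ ⟨∑ i, (m i z : ℕ), sum_lt z⟩,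
    fun z w h ↦ Finset.sum_le_sum fun i _ ↦ val_mono h i⟩, fun z w h i ↦ hm i z w (Fin.ext ?_)⟩
  have hsum : ∑ i, (m i z : ℕ) = ∑ i, (m i w : ℕ) := congrArg Fin.val h
  rcases le_total z w with hzw | hwz
  · exact (Finset.sum_eq_sum_iff_of_le fun i _ ↦ val_mono hzw i).1 hsum i (Finset.mem_univ i)
  · exact ((Finset.sum_eq_sum_iff_of_le fun i _ ↦ val_mono hwz i).1 hsum.symm i
      (Finset.mem_univ i)).symm

theorem exists_monotone_lex_refinement {α : Type*} [Preorder α] {p q : ℕ} (L : α →o Fin p)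
    (M : Fin p → α →o Fin q) :
    ∃ L' : α →o Fin (p * q), ∀ ⦃z w⦄, L' z = L' w → L z = L w ∧ M (L z) z = M (L z) w := by
  refine ⟨⟨fun z ↦ finProdFinEquiv (L z, M (L z) z), fun z w hzw ↦ ?_⟩, fun z w h ↦ ?_⟩
  · rw [Fin.le_def, finProdFinEquiv_apply_val, finProdFinEquiv_apply_val]
    rcases (L.monotone hzw).eq_or_lt with h | h
    · rw [← h]
      exact Nat.add_le_add_right ((M (L z)).monotone hzw) _
    · calc (M (L z) z : ℕ) + q * L z ≤ q * (L z + 1) := by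
            rw [mul_add_one, add_comm]
            exact Nat.add_le_add_left (M (L z) z).is_lt.le _
        _ ≤ q * L w := Nat.mul_le_mul_left q h
        _ ≤ M (L w) w + q * L w := Nat.le_add_left _ _
  · obtain ⟨hL, hM⟩ := Prod.mk.inj (finProdFinEquiv.injective h)
    exact ⟨hL, hM.trans (by rw [hL])⟩

end MonotoneLabels

section PiecewiseAffine

/-- The functions that agree with an affine map on every fibre of the labelling `L`. The fibres
are the "pieces": for a monotone `L : ℝ → Fin p` they are at most `p` consecutive intervals. -/
def piecewiseAffine (K : Type*) {V E κ : Type*} [CommRing K] [AddCommGroup V] [Module K V]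
    [AddCommGroup E] [Module K E] (L : V → κ) : Submodule K (V → E) where
  carrier := {φ | ∀ k, ∃ A : V →ᵃ[K] E, ∀ z, L z = k → φ z = A z}
  zero_mem' _ := ⟨0, fun _ _ ↦ rfl⟩
  add_mem' hφ hψ k :=
    let ⟨A, hA⟩ := hφ k
    let ⟨B, hB⟩ := hψ k
    ⟨A + B, fun z hz ↦ congrArg₂ (· + ·) (hA z hz) (hB z hz)⟩
  smul_mem' c _ hφ k :=
    let ⟨A, hA⟩ := hφ k
    ⟨c • A, fun z hz ↦ congrArg (c • ·) (hA z hz)⟩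

variable {K V E κ : Type*} [CommRing K] [AddCommGroup V] [Module K V] [AddCommGroup E] [Module K E]

theorem affineMap_mem_piecewiseAffine (A : V →ᵃ[K] E) (L : V → κ) : ⇑A ∈ piecewiseAffine K L :=
  fun _ ↦ ⟨A, fun _ _ ↦ rfl⟩

theorem mem_piecewiseAffine_of_forall_point {L : V → κ} {φ : V → E}
    (h : ∀ z, ∃ A : V →ᵃ[K] E, ∀ w, L w = L z → φ w = A w) : φ ∈ piecewiseAffine K L := fun k ↦ by
  by_cases hk : ∃ z, L z = k
  · obtain ⟨z, rfl⟩ := hk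
    exact h z
  · exact ⟨0, fun z hz ↦ absurd ⟨z, hz⟩ hk⟩

theorem piecewiseAffine_le_of_refines {κ' : Type*} {L : V → κ} {L' : V → κ'}
    (h : ∀ ⦃z w⦄, L' z = L' w → L z = L w) :
    (piecewiseAffine K L : Submodule K (V → E)) ≤ piecewiseAffine K L' := fun _ hφ ↦
  mem_piecewiseAffine_of_forall_point fun z ↦
    let ⟨A, hA⟩ := hφ (L z)
    ⟨A, fun w hw ↦ hA w (h hw)⟩

theorem apply_midpoint_of_mem_piecewiseAffine [PartialOrder κ] {L : ℝ →o κ} {φ : ℝ → ℝ}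
    (hφ : φ ∈ piecewiseAffine ℝ L) {a b : ℝ} (hab : a ≤ b) (h : L a = L b) :
    φ (midpoint ℝ a b) = midpoint ℝ (φ a) (φ b) := by
  obtain ⟨A, hA⟩ := hφ (L a)
  have hmid : midpoint ℝ a b ∈ Icc a b := ⟨left_le_midpoint.2 hab, midpoint_le_right.2 hab⟩
  have hL : L (midpoint ℝ a b) = L a :=
    le_antisymm ((L.monotone hmid.2).trans_eq h.symm) (L.monotone hmid.1)
  rw [hA _ hL, hA a rfl, hA b h.symm, A.map_midpoint]

end PiecewiseAffine

section Layer

variable {K E : Type*} [CommRing K] [LinearOrder K] [IsStrictOrderedRing K] [AddCommGroup E]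
  [Module K E]

theorem affineMap_monotone_or_antitone (A : K →ᵃ[K] K) : Monotone A ∨ Antitone A := by
  have hA : A = AffineMap.lineMap (A 0) (A 1) := AffineMap.ext fun s ↦ by
    rw [← A.apply_lineMap, AffineMap.lineMap_apply_ring, mul_zero, zero_add, mul_one]
  rw [hA]
  exact (le_total (A 0) (A 1)).imp AffineMap.lineMap_mono AffineMap.lineMap_anti

theorem exists_refinement_comp {ι : Type*} [Fintype ι] {p T : ℕ} {l : K →o Fin (T + 1)}
    {σ : K → E} (hσ : σ ∈ piecewiseAffine K l) (L : K →o Fin p) {φ : ι → K → K}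
    (hφ : ∀ i, φ i ∈ piecewiseAffine K L) :
    ∃ L' : K →o Fin (p * (Fintype.card ι * T + 1)),
      (∀ ⦃z w⦄, L' z = L' w → L z = L w) ∧ ∀ i, σ ∘ φ i ∈ piecewiseAffine K L' := by
  choose A hA using hφ
  have exists_label (k : Fin p) : ∃ M : K →o Fin (Fintype.card ι * T + 1),
      ∀ ⦃z w⦄, M z = M w → ∀ i, l (A i k z) = l (A i k w) := by
    have h := exists_monotone_common_refinement (fun i ↦ l ∘ A i k) fun i ↦
      (affineMap_monotone_or_antitone (A i k)).imp l.monotone.comp l.monotone.comp_antitone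
    rwa [Finset.sum_const, smul_eq_mul, Finset.card_univ] at h
  choose M hM using exists_label
  obtain ⟨L', hL'⟩ := exists_monotone_lex_refinement L M
  refine ⟨L', fun z w h ↦ (hL' h).1, fun i ↦ mem_piecewiseAffine_of_forall_point fun z ↦ ?_⟩
  obtain ⟨B, hB⟩ := hσ (l (A i (L z) z))
  refine ⟨B.comp (A i (L z)), fun w hw ↦ ?_⟩
  obtain ⟨hLz, hMz⟩ := hL' hw.symm
  calc σ (φ i w) = σ (A i (L z) w) := congrArg σ (hA i (L z) w hLz.symm)
    _ = B (A i (L z) w) := hB _ (hM _ hMz i).symm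

end Layer

section Network

theorem PiecewiseLinear.exists_label {σ : ℝ → ℝ} {t : ℕ} (hσ : PiecewiseLinear σ t) :
    ∃ L : ℝ →o Fin t, σ ∈ piecewiseAffine ℝ L := by
  obtain ⟨I, -, hconv, hdisj, hcover, hlin⟩ := hσ
  have h := exists_monotone_label_of_partition (fun i ↦ (hconv i).ordConnected) hdisj hcover
  rw [Fintype.card_fin] at h
  obtain ⟨L, hL⟩ := h
  refine ⟨L, mem_piecewiseAffine_of_forall_point fun z ↦ ?_⟩
  obtain ⟨i, hz⟩ := mem_iUnion.1 (hcover ▸ mem_univ z)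
  obtain ⟨a, b, hab⟩ := hlin i
  refine ⟨a • AffineMap.id ℝ ℝ + AffineMap.const ℝ ℝ b, fun w hw ↦ ?_⟩
  simpa using hab w (hL hw.symm hz)

theorem sum_mul_coord_mem_piecewiseAffine {ι V κ : Type*} [Fintype ι] [AddCommGroup V] [Module ℝ V]
    (γ : V →ᵃ[ℝ] EuclideanSpace ℝ ι) (L : V → κ) (c : ι → ℝ) :
    (fun s ↦ ∑ m, c m * γ s m) ∈ piecewiseAffine ℝ L := by
  let coord (m : ι) : EuclideanSpace ℝ ι →ₗ[ℝ] ℝ := (EuclideanSpace.proj m).toLinearMap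
  convert affineMap_mem_piecewiseAffine ((∑ m, c m • coord m).toAffineMap.comp γ) L
  simp [coord]

namespace LayeredNet

variable {n : ℕ} (N : LayeredNet n) {σ : ℝ → ℝ}

theorem sum_mul_layer_mem_piecewiseAffine {V κ : Type*} [AddCommGroup V] [Module ℝ V]
    {γ : V → EuclideanSpace ℝ (Fin n)} {L : V → κ} {i : ℕ}
    (h : ∀ m, (fun s ↦ N.layer σ (γ s) i m) ∈ piecewiseAffine ℝ L) (c : Fin (N.width i) → ℝ) :
    (fun s ↦ ∑ m, c m * N.layer σ (γ s) i m) ∈ piecewiseAffine ℝ L := by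
  convert sum_mem fun m (_ : m ∈ Finset.univ) ↦ (piecewiseAffine ℝ L).smul_mem (c m) (h m)
  simp

variable (γ : ℝ →ᵃ[ℝ] EuclideanSpace ℝ (Fin n))

theorem exists_label_layer {T : ℕ} {l : ℝ →o Fin (T + 1)} (hσ : σ ∈ piecewiseAffine ℝ l) (d : ℕ) :
    ∃ L : ℝ →o Fin (∏ i ∈ Finset.range d, (N.width i * T + 1)),
      ∀ i < d, ∀ m, (fun s ↦ N.layer σ (γ s) i m) ∈ piecewiseAffine ℝ L := by
  induction d with
  | zero => exact ⟨⟨fun _ ↦ ⟨0, by simp⟩, monotone_const⟩, by simp⟩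
  | succ d ih =>
    obtain ⟨L, hL⟩ := ih
    let preactivation (k : Fin (N.width d)) (s : ℝ) : ℝ :=
      ∑ m, N.Win d k m * γ s m + ∑ j : Fin d, ∑ m, N.W d j k m * N.layer σ (γ s) j m + N.b d k
    have preactivation_mem (k) : preactivation k ∈ piecewiseAffine ℝ L := by
      refine add_mem (add_mem (sum_mul_coord_mem_piecewiseAffine γ L _) ?_)
        (affineMap_mem_piecewiseAffine (AffineMap.const ℝ ℝ (N.b d k)) L)
      convert sum_mem fun (j : Fin d) (_ : j ∈ Finset.univ) ↦
        N.sum_mul_layer_mem_piecewiseAffine (hL j j.is_lt) (N.W d j k)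
      simp
    have h := exists_refinement_comp hσ L preactivation_mem
    rw [Fintype.card_fin, ← Finset.prod_range_succ (fun i ↦ N.width i * T + 1)] at h
    obtain ⟨L', hrefines, hcomp⟩ := h
    refine ⟨L', fun i hi m ↦ ?_⟩
    rcases Nat.lt_succ_iff_lt_or_eq.1 hi with hid | rfl
    · exact piecewiseAffine_le_of_refines hrefines (hL i hid m)
    · convert hcomp m using 2 with s
      rw [layer]
      rfl

theorem exists_label_eval {t : ℕ} (hσ : PiecewiseLinear σ t) :
    ∃ L : ℝ →o Fin (∏ i ∈ Finset.range N.depth, (N.width i * (t - 1) + 1)),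
      (fun s ↦ N.eval σ (γ s)) ∈ piecewiseAffine ℝ L := by
  obtain ⟨l, hl⟩ := hσ.exists_label
  obtain ⟨T, rfl⟩ := Nat.exists_eq_succ_of_ne_zero (l 0).pos.ne'
  obtain ⟨L, hL⟩ := N.exists_label_layer γ hl N.depth
  refine ⟨L, add_mem (add_mem (sum_mul_coord_mem_piecewiseAffine γ L _) ?_)
    (affineMap_mem_piecewiseAffine (AffineMap.const ℝ ℝ N.c0) L)⟩
  convert sum_mem fun i hi ↦
    N.sum_mul_layer_mem_piecewiseAffine (hL i (Finset.mem_range.1 hi)) (N.c i)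
  simp

end LayeredNet

theorem prod_le_average_pow_card {ι : Type*} (s : Finset ι) {z : ι → ℝ} (hz : ∀ i ∈ s, 0 ≤ z i) :
    ∏ i ∈ s, z i ≤ ((∑ i ∈ s, z i) / s.card) ^ s.card := by
  rcases s.eq_empty_or_nonempty with rfl | hs
  · simp
  have hcard : s.card ≠ 0 := hs.card_ne_zero
  have h := Real.geom_mean_le_arith_mean s (fun _ ↦ 1) z (by simp) (by simpa using hs) hz
  simp only [Real.rpow_one, Finset.sum_const, nsmul_eq_mul, mul_one, one_mul] at h
  calc ∏ i ∈ s, z i = ((∏ i ∈ s, z i) ^ (s.card : ℝ)⁻¹) ^ s.card :=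
        (Real.rpow_inv_natCast_pow (Finset.prod_nonneg hz) hcard).symm
    _ ≤ _ := pow_le_pow_left₀ (Real.rpow_nonneg (Finset.prod_nonneg hz) _) h _

theorem LayeredNet.prod_width_mul_add_one_le {n : ℕ} (N : LayeredNet n) (T : ℕ) :
    ((∏ i ∈ Finset.range N.depth, (N.width i * T + 1) : ℕ) : ℝ) ≤
      (T * ((N.numHidden : ℝ) / N.depth) + 1) ^ N.depth := by
  rcases eq_or_ne N.depth 0 with hzero | hdepth
  · simp [hzero]
  calc ((∏ i ∈ Finset.range N.depth, (N.width i * T + 1) : ℕ) : ℝ)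
      = ∏ i ∈ Finset.range N.depth, ((N.width i : ℝ) * T + 1) := by push_cast; rfl
    _ ≤ ((∑ i ∈ Finset.range N.depth, ((N.width i : ℝ) * T + 1)) / N.depth) ^ N.depth := by
      simpa using prod_le_average_pow_card (Finset.range N.depth)
        (z := fun i ↦ (N.width i : ℝ) * T + 1) fun i _ ↦ by positivity
    _ = (T * ((N.numHidden : ℝ) / N.depth) + 1) ^ N.depth := by
      rw [Finset.sum_add_distrib, ← Finset.sum_mul, numHidden]
      push_cast [Finset.sum_const, Finset.card_range, nsmul_eq_mul]
      field_simp

end Network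

section StrongConvexity

theorem strongConvexOn_of_hasDerivWithinAt2_ge {D : Set ℝ} (hD : Convex ℝ D) {f f' f'' : ℝ → ℝ}
    {c : ℝ} (hf : ContinuousOn f D)
    (hf' : ∀ x ∈ interior D, HasDerivWithinAt f (f' x) (interior D) x)
    (hf'' : ∀ x ∈ interior D, HasDerivWithinAt f' (f'' x) (interior D) x)
    (hc : ∀ x ∈ interior D, c ≤ f'' x) : StrongConvexOn D c f := by
  rw [strongConvexOn_iff_convex]
  simp only [Real.norm_eq_abs, sq_abs]
  refine convexOn_of_hasDerivWithinAt2_nonneg (f' := fun x ↦ f' x - c * x)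
    (f'' := fun x ↦ f'' x - c) hD (by fun_prop) (fun x hx ↦ ?_) (fun x hx ↦ ?_)
    fun x hx ↦ sub_nonneg.2 (hc x hx)
  · refine ((hf' x hx).sub
      (((hasDerivAt_id' x).hasDerivWithinAt.pow 2).const_mul (c / 2))).congr_deriv ?_
    push_cast
    ring
  · simpa only [mul_one] using! (hf'' x hx).sub ((hasDerivAt_id' x).hasDerivWithinAt.const_mul c)

theorem mul_sq_norm_sub_le_of_strongConvexOn_of_apply_midpoint {E : Type*} [NormedAddCommGroup E]
    [NormedSpace ℝ E] {s : Set E} {F φ : E → ℝ} {c ε : ℝ} (hF : StrongConvexOn s c F)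
    (happrox : ∀ z ∈ s, |φ z - F z| ≤ ε) {a b : E} (ha : a ∈ s) (hb : b ∈ s)
    (hmid : φ (midpoint ℝ a b) = midpoint ℝ (φ a) (φ b)) : c * ‖a - b‖ ^ 2 ≤ 16 * ε := by
  have hms : midpoint ℝ a b ∈ s := hF.1.midpoint_mem ha hb
  have hconv := hF.2 ha hb one_half_pos.le one_half_pos.le (add_halves 1)
  have hab : (1 / 2 : ℝ) • a + (1 / 2 : ℝ) • b = midpoint ℝ a b := by
    rw [midpoint_eq_smul_add, smul_add, one_div, invOf_eq_inv]
  rw [hab, smul_eq_mul, smul_eq_mul] at hconv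
  have hφ : φ (midpoint ℝ a b) = (φ a + φ b) / 2 := by
    rw [hmid, midpoint_eq_smul_add, invOf_eq_inv, smul_eq_mul, inv_mul_eq_div]
  -- The midpoint gap of `F` is at least `c / 8 * ‖a - b‖ ^ 2` and at most `2 * ε`.
  linarith [(abs_le.1 (happrox a ha)).1, (abs_le.1 (happrox b hb)).1,
    (abs_le.1 (happrox _ hms)).2]

theorem exists_label_eq_of_inv_le_sub {p : ℕ} (L : ℝ → Fin p) :
    ∃ a ∈ Icc (0 : ℝ) 1, ∃ b ∈ Icc (0 : ℝ) 1, L a = L b ∧ (p : ℝ)⁻¹ ≤ b - a := by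
  have hp : (0 : ℝ) < p := Nat.cast_pos.2 (L 0).pos
  let node (i : Fin (p + 1)) : ℝ := i / p
  have node_mem (i) : node i ∈ Icc (0 : ℝ) 1 :=
    ⟨by positivity, div_le_one_of_le₀ (Nat.cast_le.2 i.is_le) hp.le⟩
  obtain ⟨i, j, hij, hL⟩ : ∃ i j, i ≠ j ∧ L (node i) = L (node j) :=
    Fintype.exists_ne_map_eq_of_card_lt (L ∘ node) (by simp)
  wlog hlt : i < j generalizing i j
  · exact this j i hij.symm hL.symm (hij.symm.lt_of_le (not_lt.1 hlt))
  refine ⟨node i, node_mem i, node j, node_mem j, hL, ?_⟩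
  have : (i : ℝ) + 1 ≤ j := mod_cast hlt
  rw [← sub_div, inv_eq_one_div]
  gcongr
  linarith

theorem strongConvexOn_modulus_le_of_piecewiseAffine_approx {p : ℕ} {L : ℝ →o Fin p}
    {F φ : ℝ → ℝ} {c ε : ℝ} (hφ : φ ∈ piecewiseAffine ℝ L) (hc : 0 ≤ c)
    (hF : StrongConvexOn (Icc 0 1) c F) (happrox : ∀ s ∈ Icc (0 : ℝ) 1, |φ s - F s| ≤ ε) :
    c ≤ 16 * ε * p ^ 2 := by
  have hp : (0 : ℝ) < p := Nat.cast_pos.2 (L 0).pos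
  obtain ⟨a, ha, b, hb, hL, hab⟩ := exists_label_eq_of_inv_le_sub L
  have hle : a ≤ b := sub_nonneg.1 ((inv_nonneg.2 hp.le).trans hab)
  have hmid := apply_midpoint_of_mem_piecewiseAffine hφ hle hL
  have key := mul_sq_norm_sub_le_of_strongConvexOn_of_apply_midpoint hF happrox ha hb hmid
  rw [norm_sub_rev, Real.norm_of_nonneg (sub_nonneg.2 hle)] at key
  calc c = c * (p : ℝ)⁻¹ ^ 2 * p ^ 2 := by field_simp
    _ ≤ c * (b - a) ^ 2 * p ^ 2 := by gcongr
    _ ≤ 16 * ε * p ^ 2 := by gcongr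

end StrongConvexity

section SecondDerivative

theorem forall_le_or_forall_le_neg_of_le_abs {X : Type*} [TopologicalSpace X] {s : Set X}
    (hs : IsPreconnected s) {q : X → ℝ} (hq : ContinuousOn q s) {c : ℝ} (hc : 0 < c)
    (h : ∀ x ∈ s, c ≤ |q x|) : (∀ x ∈ s, c ≤ q x) ∨ ∀ x ∈ s, c ≤ -q x := by
  by_contra! hcon
  obtain ⟨⟨x, hx, hqx⟩, ⟨y, hy, hqy⟩⟩ := hcon
  have hx0 : q x ≤ 0 := by
    rcases le_abs.1 (h x hx) with h | h <;> linarith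
  have hy0 : 0 ≤ q y := by
    rcases le_abs.1 (h y hy) with h | h <;> linarith
  obtain ⟨u, hu, hqu⟩ := hs.intermediate_value hx hy hq ⟨hx0, hy0⟩
  exact (h u hu).not_gt (by rwa [hqu, abs_zero])

variable {E : Type*} [NormedAddCommGroup E] [NormedSpace ℝ E] {g : E → ℝ} {x y : E} {s : ℝ}

theorem hasDerivAt_comp_lineMap (hg : DifferentiableAt ℝ g (AffineMap.lineMap x y s)) :
    HasDerivAt (fun s ↦ g (AffineMap.lineMap x y s))
      (fderiv ℝ g (AffineMap.lineMap x y s) (y - x)) s :=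
  hg.hasFDerivAt.comp_hasDerivAt s AffineMap.hasDerivAt_lineMap

theorem hasDerivAt_fderiv_comp_lineMap
    (hg : DifferentiableAt ℝ (fderiv ℝ g) (AffineMap.lineMap x y s)) (v : E) :
    HasDerivAt (fun s ↦ fderiv ℝ g (AffineMap.lineMap x y s) v)
      (fderiv ℝ (fderiv ℝ g) (AffineMap.lineMap x y s) (y - x) v) s := by
  simpa using (hg.hasFDerivAt.comp_hasDerivAt s AffineMap.hasDerivAt_lineMap).clm_apply
    (hasDerivAt_const s v)

theorem continuousAt_fderiv_fderiv_comp_lineMap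
    (hg : ContDiffAt ℝ 2 g (AffineMap.lineMap x y s)) (v w : E) :
    ContinuousAt (fun s ↦ fderiv ℝ (fderiv ℝ g) (AffineMap.lineMap x y s) v w) s := by
  have hcont : ContinuousAt (fderiv ℝ (fderiv ℝ g)) (AffineMap.lineMap x y s) :=
    ((hg.fderiv_right one_add_one_eq_two.le).fderiv_right (zero_add 1).le).continuousAt
  have hpath : ContinuousAt (AffineMap.lineMap x y : ℝ → E) s :=
    AffineMap.hasDerivAt_lineMap.continuousAt
  exact ((ContinuousAt.comp (f := (AffineMap.lineMap x y : ℝ → E)) hcont hpath).clm_apply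
    continuousAt_const).clm_apply continuousAt_const

theorem strongConvexOn_or_neg_comp_lineMap
    (hg : ∀ s ∈ Icc (0 : ℝ) 1, ContDiffAt ℝ 2 g (AffineMap.lineMap x y s)) {c : ℝ} (hc : 0 < c)
    (h : ∀ s ∈ Icc (0 : ℝ) 1,
      c ≤ |fderiv ℝ (fderiv ℝ g) (AffineMap.lineMap x y s) (y - x) (y - x)|) :
    StrongConvexOn (Icc 0 1) c (fun s : ℝ ↦ g (AffineMap.lineMap x y s)) ∨
      StrongConvexOn (Icc 0 1) c (fun s : ℝ ↦ -g (AffineMap.lineMap x y s)) := by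
  have deriv1 (s : ℝ) (hs : s ∈ Icc (0 : ℝ) 1) :=
    hasDerivAt_comp_lineMap ((hg s hs).differentiableAt two_ne_zero)
  have deriv2 (s : ℝ) (hs : s ∈ Icc (0 : ℝ) 1) :=
    hasDerivAt_fderiv_comp_lineMap
      (((hg s hs).fderiv_right one_add_one_eq_two.le).differentiableAt one_ne_zero) (y - x)
  have cont2 : ContinuousOn
      (fun s : ℝ ↦ fderiv ℝ (fderiv ℝ g) (AffineMap.lineMap x y s) (y - x) (y - x))
      (Icc 0 1) :=
    fun s hs ↦ (continuousAt_fderiv_fderiv_comp_lineMap (hg s hs) _ _).continuousWithinAt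
  refine (forall_le_or_forall_le_neg_of_le_abs isPreconnected_Icc cont2 hc h).imp
    (fun h ↦ strongConvexOn_of_hasDerivWithinAt2_ge (convex_Icc 0 1)
      (fun s hs ↦ (deriv1 s hs).continuousAt.continuousWithinAt)
      (fun s hs ↦ (deriv1 s (interior_subset hs)).hasDerivWithinAt)
      (fun s hs ↦ (deriv2 s (interior_subset hs)).hasDerivWithinAt)
      fun s hs ↦ h s (interior_subset hs))
    fun h ↦ strongConvexOn_of_hasDerivWithinAt2_ge (convex_Icc 0 1)
      (fun s hs ↦ (deriv1 s hs).neg.continuousAt.continuousWithinAt)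
      (fun s hs ↦ (deriv1 s (interior_subset hs)).neg.hasDerivWithinAt)
      (fun s hs ↦ (deriv2 s (interior_subset hs)).neg.hasDerivWithinAt)
      fun s hs ↦ h s (interior_subset hs)

end SecondDerivative

section Definiteness

open scoped Matrix MatrixOrder

variable {ι : Type*} [Fintype ι] [DecidableEq ι] {A : Matrix ι ι ℝ}

theorem mul_dotProduct_self_le_of_le_spectrum (hA : A.IsHermitian) {c : ℝ}
    (hc : ∀ μ ∈ spectrum ℝ A, c ≤ μ) (v : ι → ℝ) : c * (v ⬝ᵥ v) ≤ v ⬝ᵥ A *ᵥ v := by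
  have hle : algebraMap ℝ (Matrix ι ι ℝ) c ≤ A :=
    (algebraMap_le_iff_le_spectrum hA.isSelfAdjoint).2 hc
  simpa [Matrix.sub_mulVec, dotProduct_sub, Algebra.algebraMap_eq_smul_one, Matrix.smul_mulVec]
    using (Matrix.le_iff.1 hle).dotProduct_mulVec_nonneg v

theorem dotProduct_mulVec_self_le_of_spectrum_le (hA : A.IsHermitian) {c : ℝ}
    (hc : ∀ μ ∈ spectrum ℝ A, μ ≤ c) (v : ι → ℝ) : v ⬝ᵥ A *ᵥ v ≤ c * (v ⬝ᵥ v) := by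
  have hle : A ≤ algebraMap ℝ (Matrix ι ι ℝ) c :=
    (le_algebraMap_iff_spectrum_le hA.isSelfAdjoint).2 hc
  simpa [Matrix.sub_mulVec, dotProduct_sub, Algebra.algebraMap_eq_smul_one, Matrix.smul_mulVec]
    using (Matrix.le_iff.1 hle).dotProduct_mulVec_nonneg v

/-- The quantity whose infimum along the segment defines `Psi`: for symmetric `A`, the least
absolute value of an eigenvalue when `A` is definite, and `0` otherwise. -/
noncomputable def definitenessGap {n : ℕ} (A : Matrix (Fin n) (Fin n) ℝ) : ℝ :=
  max 0 (Real.sign (lamMax A * lamMin A) * min |lamMax A| |lamMin A|)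

theorem definitenessGap_of_nonpos {n : ℕ} {A : Matrix (Fin n) (Fin n) ℝ}
    (h : lamMax A * lamMin A ≤ 0) : definitenessGap A = 0 := by
  have hsign : Real.sign (lamMax A * lamMin A) ≤ 0 := by
    rcases h.lt_or_eq with h | h
    · exact (Real.sign_of_neg h).trans_le (by norm_num)
    · rw [h, Real.sign_zero]
  exact max_eq_left (mul_nonpos_of_nonpos_of_nonneg hsign (by positivity))

theorem definitenessGap_of_pos {n : ℕ} {A : Matrix (Fin n) (Fin n) ℝ}
    (h : 0 < lamMax A * lamMin A) : definitenessGap A = min |lamMax A| |lamMin A| := by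
  rw [definitenessGap, Real.sign_of_pos h, one_mul, max_eq_right (by positivity)]

theorem definitenessGap_mul_dotProduct_self_le_abs {n : ℕ} {A : Matrix (Fin n) (Fin n) ℝ}
    (hA : A.IsHermitian) (v : Fin n → ℝ) :
    definitenessGap A * (v ⬝ᵥ v) ≤ |v ⬝ᵥ A *ᵥ v| := by
  rcases le_or_gt (lamMax A * lamMin A) 0 with h | h
  · rw [definitenessGap_of_nonpos h, zero_mul]
    exact abs_nonneg _
  have hfin : (spectrum ℝ A).Finite := A.finite_real_spectrum
  have hmin : lamMin A * (v ⬝ᵥ v) ≤ v ⬝ᵥ A *ᵥ v :=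
    mul_dotProduct_self_le_of_le_spectrum hA (fun _ ↦ csInf_le hfin.bddBelow) v
  have hmax : v ⬝ᵥ A *ᵥ v ≤ lamMax A * (v ⬝ᵥ v) :=
    dotProduct_mulVec_self_le_of_spectrum_le hA (fun _ ↦ le_csSup hfin.bddAbove) v
  have hv : 0 ≤ v ⬝ᵥ v := dotProduct_self_star_nonneg v
  rw [definitenessGap_of_pos h]
  rcases mul_pos_iff.1 h with ⟨-, hpos⟩ | ⟨hneg, -⟩
  · calc min |lamMax A| |lamMin A| * (v ⬝ᵥ v) ≤ |lamMin A| * (v ⬝ᵥ v) := by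
          gcongr; exact min_le_right _ _
      _ = lamMin A * (v ⬝ᵥ v) := by rw [abs_of_pos hpos]
      _ ≤ |v ⬝ᵥ A *ᵥ v| := hmin.trans (le_abs_self _)
  · calc min |lamMax A| |lamMin A| * (v ⬝ᵥ v) ≤ |lamMax A| * (v ⬝ᵥ v) := by
          gcongr; exact min_le_left _ _
      _ = -(lamMax A * (v ⬝ᵥ v)) := by rw [abs_of_neg hneg, neg_mul]
      _ ≤ |v ⬝ᵥ A *ᵥ v| := (neg_le_neg hmax).trans (neg_le_abs _)

end Definiteness

section Hessian

open scoped Matrix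

variable {n : ℕ} {g : EuclideanSpace ℝ (Fin n) → ℝ} {x y z : EuclideanSpace ℝ (Fin n)}

theorem hess_isHermitian_s11 (hg : ContDiffAt ℝ 2 g z) : (hess g z).IsHermitian := by
  ext i j
  simp only [Matrix.conjTranspose_apply, hess, iteratedFDeriv_two_apply, star_trivial]
  exact hg.isSymmSndFDerivAt (by simp) _ _

theorem fderiv_fderiv_apply_self_eq_dotProduct_hess (v : EuclideanSpace ℝ (Fin n)) :
    fderiv ℝ (fderiv ℝ g) z v v = v.ofLp ⬝ᵥ hess g z *ᵥ v.ofLp := by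
  have hv : v = ∑ i, v i • EuclideanSpace.single i (1 : ℝ) := by
    ext j
    simp [Finset.sum_apply, Pi.single_apply]
  conv_lhs => rw [hv]
  simp only [map_sum, map_smul, sum_apply, smul_apply, smul_eq_mul, dotProduct, Matrix.mulVec,
    hess, iteratedFDeriv_two_apply, Finset.mul_sum, Matrix.cons_val_zero, Matrix.cons_val_one]
  rw [Finset.sum_comm]
  exact Finset.sum_congr rfl fun i _ ↦ Finset.sum_congr rfl fun j _ ↦ by ring

theorem sq_Psi_le_definitenessGap {s : ℝ} (hs : s ∈ Icc (0 : ℝ) 1) :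
    Psi g x y ^ 2 ≤ definitenessGap (hess g (AffineMap.lineMap x y s)) := by
  set gaps := (fun α : ℝ ↦ definitenessGap (hess g ((1 - α) • x + α • y))) '' Icc 0 1
  have hgaps : ∀ r ∈ gaps, 0 ≤ r := forall_mem_image.2 fun _ _ ↦ le_max_left _ _
  have hPsi : Psi g x y ^ 2 = sInf gaps := Real.sq_sqrt (Real.sInf_nonneg hgaps)
  rw [hPsi, AffineMap.lineMap_apply_module]
  exact csInf_le ⟨0, hgaps⟩ ⟨s, hs, rfl⟩

theorem sq_norm_sub_mul_Psi_le_abs_fderiv_fderiv {s : ℝ} (hs : s ∈ Icc (0 : ℝ) 1)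
    (hg : ContDiffAt ℝ 2 g (AffineMap.lineMap x y s)) :
    (‖x - y‖ * Psi g x y) ^ 2 ≤
      |fderiv ℝ (fderiv ℝ g) (AffineMap.lineMap x y s) (y - x) (y - x)| := by
  have hnorm : ‖x - y‖ ^ 2 = (y - x).ofLp ⬝ᵥ (y - x).ofLp := by
    rw [norm_sub_rev, EuclideanSpace.real_norm_sq_eq]
    simp only [dotProduct, sq]
  rw [fderiv_fderiv_apply_self_eq_dotProduct_hess, mul_pow, mul_comm, hnorm]
  calc _ ≤ definitenessGap (hess g (AffineMap.lineMap x y s)) *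
        ((y - x).ofLp ⬝ᵥ (y - x).ofLp) := by
        gcongr
        · exact dotProduct_self_star_nonneg _
        · exact sq_Psi_le_definitenessGap hs
    _ ≤ _ := definitenessGap_mul_dotProduct_self_le_abs (hess_isHermitian_s11 hg) _

end Hessian

theorem norm_sub_mul_Psi_le_of_piecewiseAffine_approx {n : ℕ} {g : EuclideanSpace ℝ (Fin n) → ℝ}
    {x y : EuclideanSpace ℝ (Fin n)} (hg : ∀ z ∈ segment ℝ x y, ContDiffAt ℝ 2 g z) {p : ℕ}
    {L : ℝ →o Fin p} {f : EuclideanSpace ℝ (Fin n) → ℝ}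
    (hf : (fun s ↦ f (AffineMap.lineMap x y s)) ∈ piecewiseAffine ℝ L) {ε : ℝ}
    (happrox : ∀ z ∈ segment ℝ x y, |f z - g z| ≤ ε) :
    ‖x - y‖ * Psi g x y ≤ 4 * √ε * p := by
  have hε : 0 ≤ ε := (abs_nonneg _).trans (happrox x (left_mem_segment ℝ x y))
  have hmem {s : ℝ} (hs : s ∈ Icc (0 : ℝ) 1) : AffineMap.lineMap x y s ∈ segment ℝ x y :=
    segment_eq_image_lineMap ℝ x y ▸ mem_image_of_mem _ hs
  suffices hsq : (‖x - y‖ * Psi g x y) ^ 2 ≤ 16 * ε * p ^ 2 by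
    refine (le_abs_self _).trans (abs_le_of_sq_le_sq (hsq.trans_eq ?_) (by positivity))
    rw [mul_pow, mul_pow, Real.sq_sqrt hε]
    norm_num
  rcases (sq_nonneg (‖x - y‖ * Psi g x y)).eq_or_lt with hzero | hpos
  · rw [← hzero]
    positivity
  rcases strongConvexOn_or_neg_comp_lineMap (fun s hs ↦ hg _ (hmem hs)) hpos fun s hs ↦
    sq_norm_sub_mul_Psi_le_abs_fderiv_fderiv hs (hg _ (hmem hs)) with hconv | hconc
  · exact strongConvexOn_modulus_le_of_piecewiseAffine_approx hf hpos.le hconv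
      fun s hs ↦ happrox _ (hmem hs)
  · refine strongConvexOn_modulus_le_of_piecewiseAffine_approx (neg_mem hf) hpos.le hconc
      fun s hs ↦ ?_
    rw [Pi.neg_apply, neg_sub_neg, abs_sub_comm]
    exact happrox _ (hmem hs)

theorem network_approx_lower_bound_general {n : ℕ} {x y : EuclideanSpace ℝ (Fin n)}
    {g : EuclideanSpace ℝ (Fin n) → ℝ} (hg : ∀ z ∈ segment ℝ x y, ContDiffAt ℝ 2 g z)
    {ε : ℝ} (hε : 0 < ε) (N : LayeredNet n) {σ : ℝ → ℝ} {t : ℕ}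
    (hσ : PiecewiseLinear σ t) (hf : ∀ z ∈ segment ℝ x y, |N.eval σ z - g z| ≤ ε) :
    (((t : ℝ) - 1) * ((N.numHidden : ℝ) / (N.depth : ℝ)) + 1) ^ N.depth ≥
      (‖x - y‖ / (4 * Real.sqrt ε)) * Psi g x y := by
  obtain ⟨l, -⟩ := hσ.exists_label
  obtain ⟨L, hL⟩ := N.exists_label_eval (AffineMap.lineMap x y) hσ
  have hpieces := N.prod_width_mul_add_one_le (t - 1)
  rw [Nat.cast_pred (l 0).pos] at hpieces
  have hcurv := norm_sub_mul_Psi_le_of_piecewiseAffine_approx hg hL hf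
  rw [ge_iff_le, div_mul_eq_mul_div, div_le_iff₀' (by positivity)]
  exact hcurv.trans (by gcongr)

/-- Theorem 1: if a layered feedforward network with piecewise linear activation
(`t` pieces) ε-approximates a C² function `g` on a compact convex set `R`, then
`((t − 1)·ω + 1)^d ≥ (‖x − y‖₂ / (4√ε)) · Ψ(g, x, y)` for all `x, y ∈ R`. -/
theorem network_approx_lower_bound {n : ℕ}
    (R : Set (EuclideanSpace ℝ (Fin n))) (hRc : IsCompact R) (hR : Convex ℝ R)
    (U : Set (EuclideanSpace ℝ (Fin n))) (hU : IsOpen U) (hRU : R ⊆ U)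
    (g : EuclideanSpace ℝ (Fin n) → ℝ) (hg : ContDiffOn ℝ 2 g U)
    (ε : ℝ) (hε : 0 < ε)
    (N : LayeredNet n) (hd : 1 ≤ N.depth) (hw : ∀ i < N.depth, 1 ≤ N.width i)
    (σ : ℝ → ℝ) (t : ℕ) (ht : 1 ≤ t) (hσ : PiecewiseLinear σ t)
    (hf : ∀ z ∈ R, |N.eval σ z - g z| ≤ ε)
    (x y : EuclideanSpace ℝ (Fin n)) (hx : x ∈ R) (hy : y ∈ R) :
    (((t : ℝ) - 1) * ((N.numHidden : ℝ) / (N.depth : ℝ)) + 1) ^ N.depth ≥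
      (‖x - y‖ / (4 * Real.sqrt ε)) * Psi g x y := by
  have hxy : segment ℝ x y ⊆ R := hR.segment_subset hx hy
  exact network_approx_lower_bound_general
    (fun z hz ↦ hg.contDiffAt (hU.mem_nhds (hRU (hxy hz)))) hε N hσ fun z hz ↦ hf z (hxy hz)
end
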